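/- Let X be a finite type and R ⊆ FreeGroup X a finite set such that Q := PresentedGroup R is Hopfian, admits a surjective group homomorphism onto FreeGroup (Fin 2), and centralizers of non-cyclic free subgroups of Q are trivial. Fix an integer m ≥ 2. Then there exist a finite type Z, a constant c ∈ ℕ, and a computable sequence (R_n)_{n∈ℕ} of finite subsets of FreeGroup Z with |R_n| = c for all n, such that the set { n ∈ ℕ : there exists a surjective group homomorphism from PresentedGroup R_n onto Q^m } is recursively enumerable but not recursive. (This is part (2) of Theorem 1.1 of the paper, stated without the hyperbolicity and small-cancellation assertions of part (1).) -/

import Mathlib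

/-- A group is Hopfian if every surjective endomorphism is injective. -/
def IsHopfian (G : Type*) [Group G] : Prop :=
  ∀ φ : G →* G, Function.Surjective φ → Function.Injective φ

/-- The set of elements of a free group represented by a given list of words. -/
def wordsSet {Z : Type*} (L : List (List (Z × Bool))) : Set (FreeGroup Z) :=
  { w | ∃ l ∈ L, w = FreeGroup.mk l }

/-!
A Turing machine is simulated by a modular machine, whose points are orbits of affine maps on
triples (state, integer, integer). The machine is embedded in a group in which a certain commutator
is trivial if and only if the machine accepts a given point; if it does not, an explicit
permutation model sends all generators, and the commutator itself, to involutions.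

Words in involutions are in turn encoded by two letters `x`, `y`, subject to finitely many relations
saying that `x` and `y ^ 4` generate a finite simple alternating group `A`. Equating the code of a
word with a nontrivial element of `A` kills both letters if the word is trivial; otherwise the
permutation model yields a group in which `A` survives. Hence no algorithm decides whether `c`
together with a variable word `w` normally generates the free group `F₂`, for some finite `c`.

A homomorphism `θ` from `Q` onto `F₂` has a section, through which `F₂` may be replaced by `Q`: it
is undecidable whether a family `r` normally generates `Q`. To express this by epimorphisms onto
`Q ^ m`, adjoin to `Q` generators splitting each `r j` into a product of `m` factors, conjugates of
factors with different indices commuting. If `r` normally generates `Q`, then the diagonal map and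
the coordinates of the diagonal of `r j` define an epimorphism onto `Q ^ m`. Conversely, in each
coordinate of an epimorphism onto `Q ^ m` all factors but one are trivial, as their centralizers are
large, and then `Q` maps onto the coordinate, bijectively as `Q` is Hopfian. Modulo the normal
closure of `r` the coordinates thus all determine one another, so that the quotient is trivial.
-/

/-! ### Groups of modular machines -/

section Generalities

theorem iff_of_eqvGen {α : Type*} {r : α → α → Prop} {P : α → Prop}
    (h : ∀ a b, r a b → (P a ↔ P b)) {a b : α} (hab : Relation.EqvGen r a b) : P a ↔ P b := by
  induction hab with
  | rel a b hab => exact h a b hab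
  | refl => rfl
  | symm _ _ _ ih => exact ih.symm
  | trans _ _ _ _ _ ih₁ ih₂ => exact ih₁.trans ih₂

theorem commute_of_semiconjBy {G : Type*} [Group G] {k r a b : G} (hk : Commute k r)
    (h : SemiconjBy r a b) (ha : Commute k a) : Commute k b := by
  rw [show b = r * a * r⁻¹ from eq_mul_inv_of_mul_eq h.eq.symm]
  exact (hk.mul_right ha).mul_right hk.inv_right

theorem swap_apply_apply_of_eq {α β : Type*} [DecidableEq (α → β)] {f g : α → β} {a : α}
    (h : f a = g a) (u : α → β) : Equiv.swap f g u a = u a := by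
  rcases eq_or_ne u f with rfl | hf
  · simp [h]
  · rcases eq_or_ne u g with rfl | hg
    · simp [h]
    · rw [Equiv.swap_apply_of_ne_of_ne hf hg]

end Generalities

/-- A rule of a modular machine with states `I`: it relates `(src, U, srcRem + modulus * V)` to
`(tgt, tgtRem + modulus * U, V)` for all integers `U` and `V`. -/
structure ModularRule (I : Type*) where
  modulus : ℕ
  modulus_pos : 0 < modulus
  src : I
  srcRem : ℕ
  tgt : I
  tgtRem : ℕ

/-- One application of a rule of a modular machine to a point, that is, to a state together with
two integers. -/
inductive ModularRule.Step {I J : Type*} (rules : J → ModularRule I) : I × ℤ × ℤ → I × ℤ × ℤ → Prop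
  | of (j : J) (U V : ℤ) :
    Step rules ((rules j).src, U, (rules j).srcRem + (rules j).modulus * V)
      ((rules j).tgt, (rules j).tgtRem + (rules j).modulus * U, V)

/-- Generators of the group of a modular machine. The letters `x`, `y` and `r j` of the usual
presentation are the products `x₁ x₂`, `y₁ y₂` and `s (r j)`, so that the generators can be sent to
involutions. -/
inductive MachineGen (I J : Type*)
  | x₁ | x₂ | y₁ | y₂ | s | k
  | t (i : I)
  | r (j : J)

namespace MachineGen

open scoped commutatorElement

instance {I J : Type*} [Finite I] [Finite J] : Finite (MachineGen I J) := by
  refine Finite.of_surjective (α := Fin 6 ⊕ I ⊕ J)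
    (Sum.elim ![x₁, x₂, y₁, y₂, s, k] (Sum.elim t r)) ?_
  rintro (_ | _ | _ | _ | _ | _ | i | j)
  exacts [⟨.inl 0, rfl⟩, ⟨.inl 1, rfl⟩, ⟨.inl 2, rfl⟩, ⟨.inl 3, rfl⟩, ⟨.inl 4, rfl⟩, ⟨.inl 5, rfl⟩,
    ⟨.inr (.inl i), rfl⟩, ⟨.inr (.inr j), rfl⟩]

section Relations

variable {I J G : Type*} [Group G] (v : MachineGen I J → G)

/-- The value of the letter `x`. -/
def xVal : G := v x₁ * v x₂

/-- The value of the letter `y`. -/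
def yVal : G := v y₁ * v y₂

/-- The value of the stable letter attached to the rule `j`. -/
def stableVal (j : J) : G := v s * v (r j)

/-- The defining relations of the group of a modular machine with accepting point
`(halt, 0, 0)`. -/
structure IsMachineRep (rules : J → ModularRule I) (halt : I) : Prop where
  commute_x_y : Commute (xVal v) (yVal v)
  commute_k_t : Commute (v k) (v (t halt))
  commute_k_stable : ∀ j, Commute (v k) (stableVal v j)
  semiconj_x : ∀ j, SemiconjBy (stableVal v j) (xVal v) (xVal v ^ (rules j).modulus)
  semiconj_y : ∀ j, SemiconjBy (stableVal v j) (yVal v ^ (rules j).modulus) (yVal v)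
  semiconj_t : ∀ j, SemiconjBy (stableVal v j)
    ((yVal v ^ (rules j).srcRem)⁻¹ * v (t (rules j).src) * yVal v ^ (rules j).srcRem)
    ((xVal v ^ (rules j).tgtRem)⁻¹ * v (t (rules j).tgt) * xVal v ^ (rules j).tgtRem)

/-- The element attached to a point of the machine: a conjugate of the letter of its state. -/
def pointVal (p : I × ℤ × ℤ) : G :=
  (xVal v ^ p.2.1 * yVal v ^ p.2.2)⁻¹ * v (t p.1) * (xVal v ^ p.2.1 * yVal v ^ p.2.2)

/-- The commutator whose triviality says that the machine accepts the point `(i, 0, n)`. -/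
def testVal (i : I) (n : ℕ) : G := ⁅(yVal v ^ n)⁻¹ * v (t i) * yVal v ^ n, v k⁆

variable {v} {rules : J → ModularRule I} {halt : I}

theorem IsMachineRep.exists_semiconjBy_pointVal (h : IsMachineRep v rules halt) {p q : I × ℤ × ℤ}
    (hpq : ModularRule.Step rules p q) :
    ∃ j, SemiconjBy (stableVal v j) (pointVal v p) (pointVal v q) := by
  obtain ⟨j, U, V⟩ := hpq
  refine ⟨j, ?_⟩
  have hc : SemiconjBy (stableVal v j) (xVal v ^ U * (yVal v ^ (rules j).modulus) ^ V)
      ((xVal v ^ (rules j).modulus) ^ U * yVal v ^ V) :=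
    ((h.semiconj_x j).zpow_right U).mul_right ((h.semiconj_y j).zpow_right V)
  have hxy : xVal v ^ U * yVal v ^ ((rules j).srcRem + (rules j).modulus * V : ℤ) =
      yVal v ^ (rules j).srcRem * (xVal v ^ U * (yVal v ^ (rules j).modulus) ^ V) := by
    rw [zpow_add, zpow_natCast, zpow_mul, zpow_natCast, ← mul_assoc, ← mul_assoc,
      ((h.commute_x_y.zpow_left U).pow_right _).eq]
  have hx : xVal v ^ ((rules j).tgtRem + (rules j).modulus * U : ℤ) * yVal v ^ V =
      xVal v ^ (rules j).tgtRem * ((xVal v ^ (rules j).modulus) ^ U * yVal v ^ V) := by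
    rw [zpow_add, zpow_natCast, zpow_mul, zpow_natCast, ← mul_assoc]
  simpa only [pointVal, hxy, hx, mul_inv_rev, mul_assoc] using
    (hc.inv_right.mul_right (h.semiconj_t j)).mul_right hc

theorem IsMachineRep.testVal_eq_one (h : IsMachineRep v rules halt) {i : I} {n : ℕ}
    (hn : Relation.EqvGen (ModularRule.Step rules) (i, 0, n) (halt, 0, 0)) :
    testVal v i n = 1 := by
  have hstep (p q) (hpq : ModularRule.Step rules p q) :
      Commute (v k) (pointVal v p) ↔ Commute (v k) (pointVal v q) := by
    obtain ⟨j, hj⟩ := h.exists_semiconjBy_pointVal hpq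
    exact ⟨commute_of_semiconjBy (h.commute_k_stable j) hj,
      commute_of_semiconjBy (h.commute_k_stable j).inv_right hj.inv_symm_left⟩
  have hhalt : Commute (v k) (pointVal v (halt, 0, 0)) := by
    simpa [pointVal] using h.commute_k_t
  rw [testVal, commutatorElement_eq_one_iff_commute]
  simpa [pointVal] using ((iff_of_eqvGen hstep hn).2 hhalt).symm

end Relations

section Relators

variable {I J G H : Type*} [Group G] [Group H]

/-- The word that is trivial in a group if and only if `SemiconjBy a b c` holds there. -/
def semiconjWord (a b c : G) : G := a * b * (c * a)⁻¹

theorem semiconjWord_eq_one {a b c : G} : semiconjWord a b c = 1 ↔ SemiconjBy a b c :=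
  mul_inv_eq_one

theorem map_semiconjWord (f : G →* H) (a b c : G) :
    f (semiconjWord a b c) = semiconjWord (f a) (f b) (f c) := by
  simp only [semiconjWord, map_mul, map_inv]

theorem map_xVal (f : G →* H) (v : MachineGen I J → G) : f (xVal v) = xVal (f ∘ v) :=
  map_mul f _ _

theorem map_yVal (f : G →* H) (v : MachineGen I J → G) : f (yVal v) = yVal (f ∘ v) :=
  map_mul f _ _

theorem map_stableVal (f : G →* H) (v : MachineGen I J → G) (j : J) :
    f (stableVal v j) = stableVal (f ∘ v) j :=
  map_mul f _ _

theorem map_testVal (f : G →* H) (v : MachineGen I J → G) (i : I) (n : ℕ) :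
    f (testVal v i n) = testVal (f ∘ v) i n := by
  simp only [testVal, map_commutatorElement, map_mul, map_inv, map_pow, map_yVal,
    Function.comp_apply]

variable (v : MachineGen I J → G) (rules : J → ModularRule I) (halt : I)

/-- The words expressing the relations `IsMachineRep`. -/
def relators : Set G :=
  {semiconjWord (xVal v) (yVal v) (yVal v), semiconjWord (v k) (v (t halt)) (v (t halt))} ∪
    Set.range (fun j => semiconjWord (v k) (stableVal v j) (stableVal v j)) ∪
    Set.range (fun j => semiconjWord (stableVal v j) (xVal v) (xVal v ^ (rules j).modulus)) ∪
    Set.range (fun j => semiconjWord (stableVal v j) (yVal v ^ (rules j).modulus) (yVal v)) ∪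
    Set.range (fun j => semiconjWord (stableVal v j)
      ((yVal v ^ (rules j).srcRem)⁻¹ * v (t (rules j).src) * yVal v ^ (rules j).srcRem)
      ((xVal v ^ (rules j).tgtRem)⁻¹ * v (t (rules j).tgt) * xVal v ^ (rules j).tgtRem))

theorem relators_finite [Finite J] : (relators v rules halt).Finite := by
  unfold relators
  exact Set.toFinite _

theorem map_relators_eq_one_iff (f : G →* H) :
    (∀ w ∈ relators v rules halt, f w = 1) ↔ IsMachineRep (f ∘ v) rules halt := by
  simp only [relators, Set.mem_union, Set.mem_insert_iff, Set.mem_singleton_iff, or_imp, forall_and,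
    forall_eq, Set.forall_mem_range, map_semiconjWord, semiconjWord_eq_one, map_xVal, map_yVal,
    map_stableVal, map_mul, map_inv, map_pow]
  exact ⟨fun ⟨⟨⟨⟨⟨hxy, hkt⟩, hkr⟩, hx⟩, hy⟩, ht⟩ => ⟨hxy, hkt, hkr, hx, hy, ht⟩,
    fun ⟨hxy, hkt, hkr, hx, hy, ht⟩ => ⟨⟨⟨⟨⟨hxy, hkt⟩, hkr⟩, hx⟩, hy⟩, ht⟩⟩

theorem testVal_mem_normalClosure {i : I} {n : ℕ}
    (hn : Relation.EqvGen (ModularRule.Step rules) (i, 0, n) (halt, 0, 0)) :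
    testVal v i n ∈ Subgroup.normalClosure (relators v rules halt) := by
  rw [← QuotientGroup.eq_one_iff, ← QuotientGroup.mk'_apply, map_testVal]
  refine IsMachineRep.testVal_eq_one ((map_relators_eq_one_iff v rules halt _).1 fun w hw => ?_) hn
  exact (QuotientGroup.eq_one_iff w).2 (Subgroup.subset_normalClosure hw)

end Relators

end MachineGen

/-! ### A permutation model of the group of a modular machine -/

/-- Points of the permutation model of the group of a modular machine: a position in `ℤ × ℤ`, a
bit to be flipped by the letters `t i`, and a function saying which points of the machine flip
it. -/
abbrev ModelPoint (I : Type*) := (ℤ × ℤ) × Bool × (I × ℤ × ℤ → Bool)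

namespace ModelPoint

variable {I : Type*}

/-- Permute the positions. -/
def onPosition (e : Equiv.Perm (ℤ × ℤ)) : Equiv.Perm (ModelPoint I) :=
  e.prodCongr (Equiv.refl _)

/-- Translate the positions. -/
def translate (a : ℤ × ℤ) : Equiv.Perm (ModelPoint I) :=
  onPosition (Equiv.addRight a)

theorem translate_apply (a : ℤ × ℤ) (w : ModelPoint I) : translate a w = (w.1 + a, w.2) :=
  rfl

theorem translate_pow (a : ℤ × ℤ) (n : ℕ) :
    (translate a : Equiv.Perm (ModelPoint I)) ^ n = translate (n • a) := by
  induction n with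
  | zero =>
    ext1 w
    simp [translate_apply]
  | succ n ih =>
    ext1 w
    rw [pow_succ', ih, Equiv.Perm.mul_apply]
    simp only [translate_apply, add_assoc, succ_nsmul]

theorem translate_commute (a b : ℤ × ℤ) :
    Commute (translate a : Equiv.Perm (ModelPoint I)) (translate b) := by
  ext1 w
  simp only [Equiv.Perm.mul_apply, translate_apply, add_right_comm]

/-- Flip the bit of a point at position `w` if its function is true at `(i, w + a)`. -/
def flip (i : I) (a : ℤ × ℤ) : Equiv.Perm (ModelPoint I) :=
  Function.Involutive.toPerm (fun w => (w.1, xor w.2.1 (w.2.2 (i, w.1 + a)), w.2.2))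
    fun w => by simp

theorem flip_apply (i : I) (a : ℤ × ℤ) (w : ModelPoint I) :
    flip i a w = (w.1, xor w.2.1 (w.2.2 (i, w.1 + a)), w.2.2) :=
  rfl

theorem translate_conj_flip (i : I) (a : ℤ × ℤ) :
    (translate a)⁻¹ * flip i 0 * translate a = flip i a := by
  rw [mul_assoc, inv_mul_eq_iff_eq_mul]
  ext1 w
  simp [translate_apply, flip_apply]

/-- The effect of a rule of modulus `b` and remainders `0` on positions. -/
def scale (b : ℕ) (hb : 0 < b) : Equiv.Perm (ℤ × ℤ) where
  toFun w := (b * w.1 + w.2 % b, w.2 / b)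
  invFun w := (w.1 / b, w.1 % b + b * w.2)
  left_inv w := by
    have hb' : (0 : ℤ) < b := mod_cast hb
    ext <;> dsimp only
    · rw [add_comm, Int.add_mul_ediv_left _ _ hb'.ne', Int.ediv_eq_zero_of_lt
        (Int.emod_nonneg _ hb'.ne') (Int.emod_lt_of_pos _ hb'), zero_add]
    · rw [Int.mul_add_emod_self_left, Int.emod_emod, Int.emod_add_mul_ediv]
  right_inv w := by
    have hb' : (0 : ℤ) < b := mod_cast hb
    ext <;> dsimp only
    · rw [Int.add_mul_emod_self_left, Int.emod_emod, Int.mul_ediv_add_emod]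
    · rw [Int.add_mul_ediv_left _ _ hb'.ne', Int.ediv_eq_zero_of_lt
        (Int.emod_nonneg _ hb'.ne') (Int.emod_lt_of_pos _ hb'), zero_add]

theorem scale_add_left (b : ℕ) (hb : 0 < b) (w : ℤ × ℤ) :
    scale b hb (w + (1, 0)) = scale b hb w + ((b : ℤ), 0) := by
  simp [scale, mul_add, add_right_comm]

theorem scale_add_right (b : ℕ) (hb : 0 < b) (w : ℤ × ℤ) :
    scale b hb (w + (0, (b : ℤ))) = scale b hb w + (0, 1) := by
  have hb' : (b : ℤ) ≠ 0 := mod_cast hb.ne'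
  simp [scale, Int.add_ediv_of_dvd_right, Int.ediv_self hb']

section Stable

variable (R : ModularRule I) (χ : I × ℤ × ℤ → Bool)

open Classical in
/-- A permutation of the points of the machine that sends `(src, w + (0, srcRem))` to
`(tgt, scale w + (tgtRem, 0))`. -/
noncomputable def transport : Equiv.Perm (I × ℤ × ℤ) :=
  (Equiv.swap R.src R.tgt).prodCongr
    (((Equiv.addRight ((0 : ℤ), -(R.srcRem : ℤ))).trans (scale R.modulus R.modulus_pos)).trans
      (Equiv.addRight ((R.tgtRem : ℤ), (0 : ℤ))))

theorem transport_apply (w : ℤ × ℤ) : transport R (R.src, w + (0, (R.srcRem : ℤ))) =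
    (R.tgt, scale R.modulus R.modulus_pos w + ((R.tgtRem : ℤ), 0)) := by
  simp [transport, Prod.ext_iff]

/-- The permutation of functions induced by `transport`. -/
noncomputable def transportFun : Equiv.Perm (I × ℤ × ℤ → Bool) :=
  (transport R).arrowCongr (Equiv.refl _)

theorem transportFun_apply (f : I × ℤ × ℤ → Bool) (w : ℤ × ℤ) :
    transportFun R f (R.tgt, scale R.modulus R.modulus_pos w + ((R.tgtRem : ℤ), 0)) =
      f (R.src, w + (0, (R.srcRem : ℤ))) := by
  rw [← transport_apply]
  simp [transportFun]

open Classical in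
/-- The correction that makes the stable letter of a rule fix the base point: it acts only at
positions over which `transportFun R χ` and `χ` agree where it matters. -/
noncomputable def correction : Equiv.Perm (ModelPoint I) :=
  Function.Involutive.toPerm
    (fun w => (w.1, w.2.1,
      if (R.modulus : ℤ) ∣ w.1.1 then Equiv.swap (transportFun R χ) χ w.2.2 else w.2.2))
    fun w => by by_cases h : (R.modulus : ℤ) ∣ w.1.1 <;> simp [h]

/-- The value of the stable letter of a rule. -/
noncomputable def stable : Equiv.Perm (ModelPoint I) :=
  correction R χ *
    (scale R.modulus R.modulus_pos).prodCongr ((Equiv.refl _).prodCongr (transportFun R))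

open Classical in
theorem stable_apply (w : ModelPoint I) : stable R χ w =
    (scale R.modulus R.modulus_pos w.1, w.2.1,
      if (R.modulus : ℤ) ∣ (scale R.modulus R.modulus_pos w.1).1
        then Equiv.swap (transportFun R χ) χ (transportFun R w.2.2) else transportFun R w.2.2) :=
  rfl

theorem stable_apply_base : stable R χ (0, false, χ) = (0, false, χ) := by
  simp [stable_apply, scale]

theorem stable_semiconj_x :
    SemiconjBy (stable R χ) (translate (1, 0)) (translate (R.modulus, 0)) := by
  ext1 w
  simp [stable_apply, translate_apply, scale_add_left]

theorem stable_semiconj_y :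
    SemiconjBy (stable R χ) (translate (0, R.modulus)) (translate (0, 1)) := by
  ext1 w
  simp [stable_apply, translate_apply, scale_add_right]

variable {R χ}

theorem transportFun_apply_of_dvd
    (hχ : ∀ U V : ℤ, χ (R.src, U, R.srcRem + R.modulus * V) =
      χ (R.tgt, R.tgtRem + R.modulus * U, V))
    {w : ℤ × ℤ} (hw : (R.modulus : ℤ) ∣ w.1) :
    transportFun R χ (R.tgt, w + ((R.tgtRem : ℤ), 0)) = χ (R.tgt, w + ((R.tgtRem : ℤ), 0)) := by
  obtain ⟨⟨_, V⟩, U, rfl⟩ := w, hw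
  have hscale : scale R.modulus R.modulus_pos (U, R.modulus * V) = (R.modulus * U, V) := by
    have : (R.modulus : ℤ) ≠ 0 := mod_cast R.modulus_pos.ne'
    simp [scale, Int.mul_ediv_cancel_left _ this]
  rw [← hscale, transportFun_apply, hscale]
  simpa [add_comm] using hχ U V

theorem stable_semiconj_flip
    (hχ : ∀ U V : ℤ, χ (R.src, U, R.srcRem + R.modulus * V) =
      χ (R.tgt, R.tgtRem + R.modulus * U, V)) :
    SemiconjBy (stable R χ) (flip R.src (0, R.srcRem)) (flip R.tgt (R.tgtRem, 0)) := by
  classical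
  ext1 w
  rw [Equiv.Perm.mul_apply, Equiv.Perm.mul_apply, flip_apply, flip_apply, stable_apply,
    stable_apply]
  refine Prod.ext rfl (Prod.ext ?_ rfl)
  dsimp only
  split_ifs with hw
  · rw [swap_apply_apply_of_eq (transportFun_apply_of_dvd hχ hw), transportFun_apply]
  · rw [transportFun_apply]

end Stable

end ModelPoint

section DoubleCover

variable {A : Type*}

/-- Let a permutation act on the sheet `false` of a two-sheeted cover (the last bit is inert). -/
def onSheet : Equiv.Perm A →* Equiv.Perm (A × Bool × Bool) where
  toFun g :=
    { toFun := fun w => if w.2.1 then w else (g w.1, w.2)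
      invFun := fun w => if w.2.1 then w else (g⁻¹ w.1, w.2)
      left_inv := by rintro ⟨w, a, b⟩; cases a <;> simp
      right_inv := by rintro ⟨w, a, b⟩; cases a <;> simp }
  map_one' := by ext1 ⟨w, a, b⟩; cases a <;> simp
  map_mul' g h := by ext1 ⟨w, a, b⟩; cases a <;> simp

/-- The involution exchanging the two sheets through a permutation. -/
def exchange (r : Equiv.Perm A) : Equiv.Perm (A × Bool × Bool) :=
  Function.Involutive.toPerm
    (fun w => if w.2.1 then (r⁻¹ w.1, false, w.2.2) else (r w.1, true, w.2.2))
    (by rintro ⟨w, a, b⟩; cases a <;> simp)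

theorem exchange_apply (r : Equiv.Perm A) (w : A × Bool × Bool) : exchange r w =
    if w.2.1 then (r⁻¹ w.1, false, w.2.2) else (r w.1, true, w.2.2) :=
  rfl

open Classical in
/-- The involution flipping the last bit over the point `p` of the sheet `false`. -/
noncomputable def toggle (p : A) : Equiv.Perm (A × Bool × Bool) :=
  Function.Involutive.toPerm
    (fun w => if w.1 = p ∧ w.2.1 = false then (w.1, w.2.1, !w.2.2) else w)
    (by rintro ⟨w, a, b⟩; by_cases h : w = p ∧ a = false <;> simp [h])

open Classical in
theorem toggle_apply (p : A) (w : A × Bool × Bool) : toggle p w =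
    if w.1 = p ∧ w.2.1 = false then (w.1, w.2.1, !w.2.2) else w :=
  rfl

theorem exchange_semiconj_onSheet (r g : Equiv.Perm A) :
    SemiconjBy (exchange 1 * exchange r) (onSheet g) (onSheet (r * g * r⁻¹)) := by
  ext1 ⟨w, a, b⟩
  cases a <;> simp [exchange_apply, onSheet]

theorem onSheet_semiconj_toggle (g : Equiv.Perm A) (p : A) :
    SemiconjBy (onSheet g) (toggle p) (toggle (g p)) := by
  ext1 ⟨w, a, b⟩
  cases a <;> by_cases h : w = p <;> simp [toggle_apply, onSheet, h]

theorem toggle_commute_exchange {r : Equiv.Perm A} {p : A} (h : r p = p) :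
    Commute (toggle p) (exchange 1 * exchange r) := by
  have hr (w : A) : r w = p ↔ w = p := by
    rw [← r.injective.eq_iff (a := w), h]
  ext1 ⟨w, a, b⟩
  cases a <;> by_cases e : w = p <;> simp [toggle_apply, exchange_apply, e, h, hr]

theorem toggle_commute (p q : A) : Commute (toggle p) (toggle q) := by
  rcases eq_or_ne p q with rfl | hpq
  · exact Commute.refl _
  · ext1 ⟨w, a, b⟩
    by_cases hp : w = p <;> by_cases hq : w = q <;> cases a <;> simp_all [toggle_apply]

theorem toggle_mul_self (p : A) : toggle p * toggle p = 1 := by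
  ext1 ⟨w, a, b⟩
  cases a <;> by_cases h : w = p <;> simp [toggle_apply, h]

theorem exchange_mul_self (r : Equiv.Perm A) : exchange r * exchange r = 1 := by
  ext1 ⟨w, a, b⟩
  cases a <;> simp [exchange_apply]

theorem toggle_injective : Function.Injective (toggle : A → Equiv.Perm (A × Bool × Bool)) := by
  intro p q h
  by_contra hne
  simpa [toggle_apply, hne] using congrArg (fun e => e (p, false, false)) h

end DoubleCover

namespace MachineGen

variable {I J : Type*} (rules : J → ModularRule I) (χ : I × ℤ × ℤ → Bool)

/-- The values of the generators in the permutation model attached to a set `χ` of points. -/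
noncomputable def modelVal : MachineGen I J → Equiv.Perm (ModelPoint I × Bool × Bool)
  | .x₁ => onSheet (ModelPoint.onPosition ((Equiv.subLeft 1).prodCongr (Equiv.refl ℤ)))
  | .x₂ => onSheet (ModelPoint.onPosition ((Equiv.neg ℤ).prodCongr (Equiv.refl ℤ)))
  | .y₁ => onSheet (ModelPoint.onPosition ((Equiv.refl ℤ).prodCongr (Equiv.subLeft 1)))
  | .y₂ => onSheet (ModelPoint.onPosition ((Equiv.refl ℤ).prodCongr (Equiv.neg ℤ)))
  | .s => exchange 1
  | .k => toggle (0, false, χ)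
  | .t i => onSheet (ModelPoint.flip i 0)
  | .r j => exchange (ModelPoint.stable (rules j) χ)

theorem xVal_modelVal : xVal (modelVal rules χ) = onSheet (ModelPoint.translate (1, 0)) := by
  rw [xVal, modelVal, modelVal, ← map_mul]
  congr 1
  ext1 w
  simp [ModelPoint.onPosition, ModelPoint.translate, Prod.ext_iff, add_comm]

theorem yVal_modelVal : yVal (modelVal rules χ) = onSheet (ModelPoint.translate (0, 1)) := by
  rw [yVal, modelVal, modelVal, ← map_mul]
  congr 1
  ext1 w
  simp [ModelPoint.onPosition, ModelPoint.translate, Prod.ext_iff, add_comm]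

theorem stableVal_modelVal (j : J) : stableVal (modelVal rules χ) j =
    exchange 1 * exchange (ModelPoint.stable (rules j) χ) :=
  rfl

theorem modelVal_mul_self (g : MachineGen I J) : modelVal rules χ g * modelVal rules χ g = 1 := by
  have honSheet {e : Equiv.Perm (ModelPoint I)} (he : e * e = 1) :
      onSheet e * onSheet e = 1 := by rw [← map_mul, he, map_one]
  cases g with
  | s => exact exchange_mul_self _
  | k => exact toggle_mul_self _
  | r j => exact exchange_mul_self _
  | _ =>
    refine honSheet ?_
    ext1 w
    simp [ModelPoint.onPosition, ModelPoint.flip_apply, Prod.ext_iff]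

theorem xVal_modelVal_pow (n : ℕ) :
    xVal (modelVal rules χ) ^ n = onSheet (ModelPoint.translate (n, 0)) := by
  rw [xVal_modelVal, ← map_pow, ModelPoint.translate_pow]
  simp

theorem yVal_modelVal_pow (n : ℕ) :
    yVal (modelVal rules χ) ^ n = onSheet (ModelPoint.translate (0, n)) := by
  rw [yVal_modelVal, ← map_pow, ModelPoint.translate_pow]
  simp

theorem semiconj_stableVal_modelVal {j : J} {g h : Equiv.Perm (ModelPoint I)}
    (hgh : SemiconjBy (ModelPoint.stable (rules j) χ) g h) :
    SemiconjBy (stableVal (modelVal rules χ) j) (onSheet g) (onSheet h) := by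
  rw [stableVal_modelVal, show h = _ * g * _⁻¹ from eq_mul_inv_of_mul_eq hgh.eq.symm]
  exact exchange_semiconj_onSheet _ g

theorem translate_conj_modelVal_t (a : ℤ × ℤ) (i : I) :
    (onSheet (ModelPoint.translate a))⁻¹ * modelVal rules χ (t i) *
      onSheet (ModelPoint.translate a) = onSheet (ModelPoint.flip i a) := by
  rw [modelVal, ← map_inv, ← map_mul, ← map_mul, ModelPoint.translate_conj_flip]

variable {rules χ}

theorem isMachineRep_modelVal {halt : I} (hχ : ∀ p q, ModularRule.Step rules p q → χ p = χ q)
    (hhalt : χ (halt, 0, 0) = false) : IsMachineRep (modelVal rules χ) rules halt where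
  commute_x_y := by
    rw [xVal_modelVal, yVal_modelVal]
    exact (ModelPoint.translate_commute _ _).map onSheet
  commute_k_t := by
    have h := onSheet_semiconj_toggle (ModelPoint.flip halt 0) (0, false, χ)
    have hfix : ModelPoint.flip halt 0 (0, false, χ) = (0, false, χ) := by
      simpa [ModelPoint.flip_apply] using show χ (halt, (0 : ℤ × ℤ)) = false from hhalt
    rw [hfix] at h
    exact Commute.symm h
  commute_k_stable j := toggle_commute_exchange (ModelPoint.stable_apply_base _ _)
  semiconj_x j := by
    rw [xVal_modelVal_pow, xVal_modelVal]
    exact semiconj_stableVal_modelVal rules χ (ModelPoint.stable_semiconj_x _ _)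
  semiconj_y j := by
    rw [yVal_modelVal_pow, yVal_modelVal]
    exact semiconj_stableVal_modelVal rules χ (ModelPoint.stable_semiconj_y _ _)
  semiconj_t j := by
    rw [xVal_modelVal_pow, yVal_modelVal_pow, translate_conj_modelVal_t, translate_conj_modelVal_t]
    exact semiconj_stableVal_modelVal rules χ
      (ModelPoint.stable_semiconj_flip fun U V => hχ _ _ (.of j U V))

theorem testVal_modelVal {i : I} {n : ℕ} (hi : χ (i, 0, n) = true) :
    testVal (modelVal rules χ) i n = toggle (0, true, χ) * toggle (0, false, χ) := by
  have hconj := onSheet_semiconj_toggle (ModelPoint.flip i (0, n)) (0, false, χ)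
  have hflip : ModelPoint.flip i (0, (n : ℤ)) (0, false, χ) = (0, true, χ) := by
    simp [ModelPoint.flip_apply, hi]
  rw [testVal, yVal_modelVal_pow, translate_conj_modelVal_t, commutatorElement_def, modelVal,
    ← hflip, eq_mul_inv_of_mul_eq hconj.eq.symm,
    inv_eq_of_mul_eq_one_right (toggle_mul_self (0, false, χ))]

theorem exists_involutive_rep_of_not_eqvGen {I : Type} {rules : J → ModularRule I} {halt i : I}
    {n : ℕ} (hn : ¬ Relation.EqvGen (ModularRule.Step rules) (i, 0, n) (halt, 0, 0)) :
    ∃ (G : Type) (_ : Group G) (v : MachineGen I J → G), (∀ g, v g * v g = 1) ∧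
      IsMachineRep v rules halt ∧ testVal v i n ≠ 1 ∧ testVal v i n * testVal v i n = 1 := by
  classical
  let χ (p : I × ℤ × ℤ) : Bool :=
    !decide (Relation.EqvGen (ModularRule.Step rules) p (halt, 0, 0))
  have hχ (p q) (hpq : ModularRule.Step rules p q) : χ p = χ q := by
    have hpq' := Relation.EqvGen.rel _ _ hpq
    simp only [χ, Bool.not_inj_iff, decide_eq_decide]
    exact ⟨.trans _ _ _ (.symm _ _ hpq'), .trans _ _ _ hpq'⟩
  have htest := testVal_modelVal (rules := rules) (χ := χ) (i := i) (n := n) (by simp [χ, hn])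
  refine ⟨_, inferInstance, modelVal rules χ, modelVal_mul_self rules χ,
    isMachineRep_modelVal hχ (by simp [χ, Relation.EqvGen.refl]), fun h => ?_, ?_⟩
  · rw [htest, mul_eq_one_iff_eq_inv, inv_eq_of_mul_eq_one_right (toggle_mul_self _)] at h
    simpa using toggle_injective h
  · rw [htest, ((toggle_commute _ _).mul_mul_mul_comm _ _), toggle_mul_self, toggle_mul_self,
      one_mul]

end MachineGen

/-! ### Encoding words by two generators -/

section AlternatingGenerators

open Equiv Equiv.Perm

theorem exists_isCycleOn_univ_pow_card_eq_one (Ω : Type*) [Fintype Ω] :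
    ∃ p : Perm Ω, p.IsCycleOn Set.univ ∧ p ^ Fintype.card Ω = 1 := by
  classical
  obtain ⟨p, hp, -⟩ := (Finset.univ : Finset Ω).exists_cycleOn
  refine ⟨p, by simpa using hp, Equiv.ext fun x => ?_⟩
  simpa using hp.pow_card_apply (Finset.mem_univ x)

variable {Ω : Type*} [Fintype Ω] [DecidableEq Ω]

theorem mem_alternatingGroup_of_pow_eq_one {p : Perm Ω} {n : ℕ} (hn : Odd n) (hp : p ^ n = 1) :
    p ∈ alternatingGroup Ω := by
  rw [mem_alternatingGroup]
  rcases Int.units_eq_one_or (sign p) with h | h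
  · exact h
  · have hsign : sign p ^ n = 1 := by rw [← map_pow, hp, map_one]
    rw [h, hn.neg_one_pow] at hsign
    exact absurd hsign (by decide)

theorem closure_pair_eq_alternatingGroup (hΩ : (Fintype.card Ω).Prime) {p q : Perm Ω}
    (hpA : p ∈ alternatingGroup Ω) (hp : p.IsCycleOn Set.univ) (hq : q.IsThreeCycle) :
    Subgroup.closure {p, q} = alternatingGroup Ω := by
  refine le_antisymm ?_ ?_
  · rw [Subgroup.closure_le]
    rintro _ (rfl | rfl)
    exacts [hpA, hq.mem_alternatingGroup]
  · have : MulAction.IsPretransitive (Subgroup.closure {p, q}) Ω := by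
      refine ⟨fun x y => ?_⟩
      obtain ⟨n, hn⟩ := hp.2 (Set.mem_univ x) (Set.mem_univ y)
      exact ⟨⟨p ^ n, zpow_mem (Subgroup.subset_closure (by simp)) _⟩, hn⟩
    have : MulAction.IsPreprimitive (Subgroup.closure {p, q}) Ω :=
      .of_prime_card (Nat.card_eq_fintype_card (α := Ω) ▸ hΩ)
    exact alternatingGroup_le_of_isPreprimitive_of_isThreeCycle_mem this hq
      (Subgroup.subset_closure (by simp))

theorem lift_pair_surjective_of_closure_eq {G : Type*} [Group G] {A : Subgroup G} {p q : G}
    (hp : p ∈ A) (hq : q ∈ A) (h : Subgroup.closure {p, q} = A) :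
    Function.Surjective (FreeGroup.lift ![(⟨p, hp⟩ : A), ⟨q, hq⟩]) := by
  intro g
  have hcomp : A.subtype.comp (FreeGroup.lift ![(⟨p, hp⟩ : A), ⟨q, hq⟩]) =
      FreeGroup.lift ![p, q] := by
    ext i
    fin_cases i <;> simp
  have hg : (g : G) ∈ (FreeGroup.lift ![p, q]).range := by
    rw [FreeGroup.range_lift_eq_closure, Matrix.range_cons_cons_empty, h]
    exact g.2
  obtain ⟨w, hw⟩ := hg
  exact ⟨w, Subtype.ext (by rw [← hw, ← hcomp]; rfl)⟩

theorem exists_isThreeCycle_sumCongr (α : Type*) {E : Type*} [Fintype α] [DecidableEq α]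
    [Fintype E] [DecidableEq E] (hE : 2 < Fintype.card E) :
    ∃ q : Perm E, (Perm.sumCongr (1 : Perm α) q).IsThreeCycle := by
  obtain ⟨a, b, c, hab, hac, hbc⟩ := Fintype.two_lt_card_iff.1 hE
  refine ⟨swap a b * swap a c, ?_⟩
  rw [← one_mul (1 : Perm α), ← Perm.sumCongr_mul, Perm.sumCongr_one_swap, Perm.sumCongr_one_swap]
  exact isThreeCycle_swap_mul_swap_same (by simpa) (by simpa) (by simpa)

end AlternatingGenerators

section InvolutionAction

variable {G : Type*} [Group G] {w : G}

open Subgroup in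
theorem exists_equiv_prod_bool_of_involution (hw : w ≠ 1) (hsq : w * w = 1) :
    ∃ e : (G ⧸ zpowers w) × Bool ≃ G, ∀ q b, e (q, b) * w = e (q, !b) := by
  let f : (G ⧸ zpowers w) × Bool → G := fun x => x.1.out * if x.2 then w else 1
  have mk_f (x) : (f x : G ⧸ zpowers w) = x.1 := by
    obtain ⟨q, b⟩ := x
    conv_rhs => rw [← Quotient.out_eq' q]
    exact QuotientGroup.eq.2 (by cases b <;> simp [f])
  have hinj : Function.Injective f := by
    rintro ⟨q, b⟩ ⟨q', b'⟩ h
    obtain rfl : q = q' := by simpa only [mk_f] using congrArg (QuotientGroup.mk (s := zpowers w)) h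
    cases b <;> cases b' <;> simp_all [f]
  have hsurj : Function.Surjective f := by
    intro g
    obtain ⟨⟨_, n, rfl⟩, hout⟩ := QuotientGroup.mk_out_eq_mul (zpowers w) g
    have hpow : w ^ 2 = 1 := by rw [pow_two, hsq]
    rcases Int.even_or_odd' n with ⟨k, rfl | rfl⟩
    · exact ⟨(g, false), by simp [f, hout, zpow_mul, hpow]⟩
    · exact ⟨(g, true), by simp [f, hout, zpow_add, zpow_mul, hpow, hsq, mul_assoc]⟩
  refine ⟨.ofBijective f ⟨hinj, hsurj⟩, fun q b => ?_⟩
  cases b <;> simp [f, mul_assoc, hsq]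

theorem exists_hom_perm_prod_bool_of_involution (hw : w ≠ 1) (hsq : w * w = 1) :
    ∃ ρ : G →* Equiv.Perm ((G ⧸ Subgroup.zpowers w) × Bool), ∀ y b, ρ w (y, b) = (y, !b) := by
  obtain ⟨e, he⟩ := exists_equiv_prod_bool_of_involution hw hsq
  refine ⟨{ toFun := fun g => (e.trans (Equiv.mulRight g⁻¹)).trans e.symm
            map_one' := by ext1; simp
            map_mul' := fun g h => by ext1; simp [mul_assoc] }, fun y b => ?_⟩
  simp [inv_eq_of_mul_eq_one_left hsq, he]

end InvolutionAction

/-- The data of a two-generator encoding of words in `ι` into `FreeGroup (Fin 2)`: a group `A`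
generated by `a` and `b` of orders dividing `period` and `3`, with marked elements. In the encoding
the second free generator `y` plays the role of `b` times an involution `y ^ 3`, the elements `α`
and `β` witness a product of three conjugates of that involution being trivial, `π i` and `μ i`
carry it to the code of the letter `i`, and `ω` is the code of the word to be tested. -/
structure CollapseFrame (ι A : Type*) [Group A] where
  a : A
  b : A
  period : ℕ
  period_pos : 0 < period
  a_pow : a ^ period = 1
  b_pow : b ^ 3 = 1
  surjective_lift : Function.Surjective (FreeGroup.lift ![a, b])
  α : A
  β : A
  ω : A
  π : ι → A
  μ : ι → A

namespace CollapseFrame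

variable {ι A G M : Type*} [Group A] [Group G] [Group M] (F : CollapseFrame ι A)

/-- The word in the free generators that stands for an element of `A`. Its second letter is the
fourth power since `y ^ 4` is the `A`-component of `y`. -/
noncomputable def word (g : A) : FreeGroup (Fin 2) :=
  FreeGroup.lift ![FreeGroup.of 0, FreeGroup.of 1 ^ 4] (Function.surjInv F.surjective_lift g)

/-- The code of a letter when `act` interprets `A` and `h` the involution. -/
def letterVal (act : A → M) (h : M) (i : ι) : M :=
  act (F.μ i) * (h * (act (F.π i) * h * (act (F.π i))⁻¹)) * (act (F.μ i))⁻¹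

/-- The product of three conjugates of the involution `h` that has to vanish. -/
def tripleVal (act : A → M) (h : M) : M :=
  h * (act F.α * h * (act F.α)⁻¹) * (act F.β * h * (act F.β)⁻¹)

/-- The encoding of words in `ι`. -/
noncomputable def encode : FreeGroup ι →* FreeGroup (Fin 2) :=
  FreeGroup.lift (F.letterVal F.word (FreeGroup.of 1 ^ 3))

/-- The relators making `word` a homomorphism with `a`, `b` as intended, together with the
vanishing of `tripleVal`. -/
def relators : Set (FreeGroup (Fin 2)) :=
  {FreeGroup.of 0 ^ F.period, FreeGroup.of 1 ^ 6, F.word F.a * (FreeGroup.of 0)⁻¹,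
    F.word F.b * (FreeGroup.of 1 ^ 4)⁻¹, F.tripleVal F.word (FreeGroup.of 1 ^ 3)} ∪
  Set.range fun g : A × A => F.word g.1 * F.word g.2 * (F.word (g.1 * g.2))⁻¹

theorem relators_finite [Finite A] : F.relators.Finite :=
  (Set.toFinite _).union (Set.finite_range _)

theorem exists_pow_mem_relators (i : Fin 2) : ∃ n, 0 < n ∧ FreeGroup.of i ^ n ∈ F.relators := by
  fin_cases i
  · exact ⟨F.period, F.period_pos, Or.inl (by simp)⟩
  · exact ⟨6, by norm_num, Or.inl (by simp)⟩

variable {F} in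
theorem eq_one_of_relators [IsSimpleGroup A] (hω : F.ω ≠ 1) {V : FreeGroup (Fin 2) →* M}
    (hV : ∀ w ∈ F.relators, V w = 1) (hVω : V (F.word F.ω) = 1) : V = 1 := by
  let U : A →* M := MonoidHom.mk' (fun g => V (F.word g)) fun g h => by
    have hgh := hV _ (Or.inr ⟨(g, h), rfl⟩)
    rw [map_mul, map_mul, map_inv] at hgh
    exact (mul_inv_eq_one.1 hgh).symm
  have hker : U.ker = ⊤ := U.normal_ker.eq_bot_or_eq_top.resolve_left fun hbot =>
    hω ((MonoidHom.ker_eq_bot_iff U).1 hbot (hVω.trans (map_one U).symm))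
  have hword (g : A) : V (F.word g) = 1 := show g ∈ U.ker from hker ▸ Subgroup.mem_top g
  have h₀ : V (FreeGroup.of 0) = 1 := by
    have h := hV (F.word F.a * (FreeGroup.of 0)⁻¹) (Or.inl (by simp))
    rwa [map_mul, hword, one_mul, map_inv, inv_eq_one] at h
  have h₁_four : V (FreeGroup.of 1) ^ 4 = 1 := by
    have h := hV (F.word F.b * (FreeGroup.of 1 ^ 4)⁻¹) (Or.inl (by simp))
    rwa [map_mul, hword, one_mul, map_inv, inv_eq_one, map_pow] at h
  have h₁_nine : V (FreeGroup.of 1) ^ 9 = 1 := by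
    have h := hV (F.tripleVal F.word (FreeGroup.of 1 ^ 3)) (Or.inl (by simp))
    simp only [tripleVal, map_mul, map_inv, hword, one_mul, inv_one, mul_one, map_pow] at h
    rw [← h]
    group
  have h₁ : V (FreeGroup.of 1) = 1 := by
    rwa [show 9 = 4 * 2 + 1 from rfl, pow_succ, pow_mul, h₁_four, one_pow, one_mul] at h₁_nine
  ext i
  fin_cases i
  exacts [h₀, h₁]

/-- An interpretation of the frame in `M` whose letter codes are the images under `D` of the
involutions `v i`. -/
structure IsModel (v : ι → G) (act : A →* M) (h : M) (D : G →* M) : Prop where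
  mul_self : h * h = 1
  commute : Commute (act F.b) h
  tripleVal : F.tripleVal act h = 1
  letterVal (i : ι) : F.letterVal act h i = D (v i)

variable {F} in
/-- The homomorphism from the free group on two generators determined by an interpretation. -/
def modelHom (F : CollapseFrame ι A) (act : A →* M) (h : M) : FreeGroup (Fin 2) →* M :=
  FreeGroup.lift ![act F.a, act F.b * h]

namespace IsModel

variable {F} {v : ι → G} {act : A →* M} {h : M} {D : G →* M} (H : F.IsModel v act h D)
include H

theorem modelHom_pow_three : F.modelHom act h (FreeGroup.of 1 ^ 3) = h := by
  have hb : act F.b ^ 3 = 1 := by rw [← map_pow, F.b_pow, map_one]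
  simp [modelHom, H.commute.mul_pow, hb, pow_succ h, H.mul_self]

theorem modelHom_pow_four : F.modelHom act h (FreeGroup.of 1 ^ 4) = act F.b := by
  have hb : act F.b ^ 3 = 1 := by rw [← map_pow, F.b_pow, map_one]
  simp [modelHom, H.commute.mul_pow, pow_succ (act F.b) 3, hb, pow_succ h, H.mul_self]

theorem modelHom_word (g : A) : F.modelHom act h (F.word g) = act g := by
  have hcomp : (F.modelHom act h).comp (FreeGroup.lift ![FreeGroup.of 0, FreeGroup.of 1 ^ 4]) =
      act.comp (FreeGroup.lift ![F.a, F.b]) := by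
    ext i
    fin_cases i
    · simp [modelHom]
    · simpa using H.modelHom_pow_four
  conv_rhs => rw [← Function.surjInv_eq F.surjective_lift g]
  exact DFunLike.congr_fun hcomp _

theorem modelHom_encode (z : FreeGroup ι) :
    F.modelHom act h (F.encode z) = D (FreeGroup.lift v z) := by
  have hcomp : (F.modelHom act h).comp F.encode = D.comp (FreeGroup.lift v) := by
    ext i
    simp [encode, ← H.letterVal i, CollapseFrame.letterVal, H.modelHom_word, -map_pow,
      H.modelHom_pow_three]
  exact DFunLike.congr_fun hcomp z

theorem modelHom_relators {w : FreeGroup (Fin 2)} (hw : w ∈ F.relators) :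
    F.modelHom act h w = 1 := by
  rcases hw with (rfl | rfl | rfl | rfl | rfl) | ⟨⟨g, g'⟩, rfl⟩
  · simp [modelHom, ← map_pow act, F.a_pow]
  · rw [show 6 = 3 * 2 from rfl, pow_mul, map_pow, H.modelHom_pow_three, pow_two, H.mul_self]
  · rw [map_mul, map_inv, H.modelHom_word, modelHom, FreeGroup.lift_apply_of]
    simp
  · rw [map_mul, map_inv, H.modelHom_pow_four, H.modelHom_word, mul_inv_cancel]
  · simp only [CollapseFrame.tripleVal, map_mul, map_inv, H.modelHom_word, H.modelHom_pow_three]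
    exact H.tripleVal
  · simp [H.modelHom_word]

end IsModel

end CollapseFrame

section BlockPermutations

open Equiv

variable {Y Ω Φ E : Type*}

/-- Permutations of the second factor. -/
def permSnd (Y Ω : Type*) : Perm Ω →* Perm (Y × Ω) where
  toFun g := Equiv.prodCongr (Equiv.refl Y) g
  map_one' := rfl
  map_mul' _ _ := rfl

theorem permSnd_apply (g : Perm Ω) (x : Y × Ω) : permSnd Y Ω g x = (x.1, g x.2) := rfl

theorem permSnd_injective [Nonempty Y] : Function.Injective (permSnd Y Ω) := by
  intro g g' h
  obtain ⟨y⟩ := ‹Nonempty Y›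
  ext x
  exact congrArg Prod.snd (DFunLike.congr_fun h (y, x))

/-- The action of a family of permutations of `Y × Bool`, one for each position in `Φ`. -/
def labelPerm (Y Φ E : Type*) : (Φ → Perm (Y × Bool)) →* Perm (Y × ((Bool × Φ) ⊕ E)) where
  toFun F :=
    { toFun := fun
        | (y, .inl (b, f)) => ((F f (y, b)).1, .inl ((F f (y, b)).2, f))
        | (y, .inr e) => (y, .inr e)
      invFun := fun
        | (y, .inl (b, f)) => (((F f).symm (y, b)).1, .inl (((F f).symm (y, b)).2, f))
        | (y, .inr e) => (y, .inr e)
      left_inv := by rintro ⟨y, ⟨b, f⟩ | e⟩ <;> simp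
      right_inv := by rintro ⟨y, ⟨b, f⟩ | e⟩ <;> simp }
  map_one' := by ext1 ⟨y, ⟨b, f⟩ | e⟩ <;> simp
  map_mul' F F' := by ext1 ⟨y, ⟨b, f⟩ | e⟩ <;> simp

@[simp]
theorem labelPerm_inl (F : Φ → Perm (Y × Bool)) (y : Y) (b : Bool) (f : Φ) :
    labelPerm Y Φ E F (y, .inl (b, f)) = ((F f (y, b)).1, .inl ((F f (y, b)).2, f)) := rfl

@[simp]
theorem labelPerm_inr (F : Φ → Perm (Y × Bool)) (y : Y) (e : E) :
    labelPerm Y Φ E F (y, .inr e) = (y, .inr e) := rfl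

/-- The permutation of the positions underlying two parallel copies of `Φ`. -/
def blockPerm (E : Type*) (s : Perm Φ) : Perm ((Bool × Φ) ⊕ E) :=
  Perm.sumCongr (Equiv.prodCongrRight fun _ : Bool => s) 1

/-- The permutation exchanging the two copies of `Φ` at the positions selected by `S`. -/
def flipPerm (E : Type*) (S : Φ → Bool) : Perm ((Bool × Φ) ⊕ E) :=
  Perm.sumCongr (Equiv.prodCongrLeft fun f => if S f then swap false true else 1) 1

theorem blockPerm_conj_labelPerm (s : Perm Φ) (F : Φ → Perm (Y × Bool)) :
    permSnd Y _ (blockPerm E s) * labelPerm Y Φ E F * (permSnd Y _ (blockPerm E s))⁻¹ =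
      labelPerm Y Φ E (F ∘ s.symm) := by
  rw [mul_inv_eq_iff_eq_mul]
  ext1 ⟨y, ⟨b, f⟩ | e⟩ <;> simp [permSnd_apply, blockPerm]

theorem permSnd_flipPerm (S : Φ → Bool) {σ : Perm (Y × Bool)} (hσ : ∀ y b, σ (y, b) = (y, !b)) :
    permSnd Y _ (flipPerm E S) = labelPerm Y Φ E fun f => if S f then σ else 1 := by
  ext1 ⟨y, ⟨b, f⟩ | e⟩
  · cases h : S f <;> cases b <;> simp [permSnd_apply, flipPerm, h, hσ]
  · simp [permSnd_apply, flipPerm]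

theorem permSnd_sumCongr_one_commute_labelPerm (q : Perm E) (F : Φ → Perm (Y × Bool)) :
    Commute (permSnd Y _ (Perm.sumCongr 1 q)) (labelPerm Y Φ E F) := by
  rw [commute_iff_eq]
  ext1 ⟨y, ⟨b, f⟩ | e⟩ <;> simp [permSnd_apply]

variable [Fintype Φ] [DecidableEq Φ] [Fintype E] [DecidableEq E]

theorem blockPerm_mem_alternatingGroup (s : Perm Φ) :
    blockPerm E s ∈ alternatingGroup ((Bool × Φ) ⊕ E) := by
  simp [Perm.mem_alternatingGroup, blockPerm, Perm.sign_sumCongr, Perm.sign_prodCongrRight]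

theorem sign_flipPerm (S : Φ → Bool) :
    Perm.sign (flipPerm E S) = ∏ f, if S f then (-1 : ℤˣ) else 1 := by
  rw [flipPerm, Perm.sign_sumCongr, Perm.sign_prodCongrLeft, map_one, mul_one]
  refine Finset.prod_congr rfl fun f _ => ?_
  split_ifs
  exacts [Perm.sign_swap (by decide), map_one _]

end BlockPermutations

section Labels

open Equiv

/-- The positions at which letters are written: three for each letter and three spare ones. -/
abbrev LetterPosition (ι : Type*) := Option ι × Fin 3

variable {ι : Type*}

/-- The labelling that writes each letter at the first two of its positions. -/
def letterLabel {M : Type*} [One M] (x : ι → M) : LetterPosition ι → M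
  | (none, _) => 1
  | (some i, j) => if j = 2 then 1 else x i

/-- The permutation of the indices `0, 1, 2` applied in all triples of positions. -/
def permIndex (τ : Perm (Fin 3)) : Perm (LetterPosition ι) := Equiv.prodCongr (Equiv.refl _) τ

/-- The last two spare positions. -/
def isSpare (f : LetterPosition ι) : Bool := f.1.isNone && decide (f.2 ≠ 0)

section

variable [DecidableEq ι]

/-- The transposition of the last two positions of the letter `i`. -/
def swapLast (i : ι) : Perm (LetterPosition ι) := swap (some i, 1) (some i, 2)

/-- The exchange of the positions of the letter `i` with the spare ones. -/
def swapSpare (i : ι) : Perm (LetterPosition ι) :=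
  Equiv.prodCongr (swap (some i) none) (Equiv.refl _)

end

variable {M : Type*} [Group M] {x : ι → M} (hx : ∀ i, x i * x i = 1)
include hx

theorem letterLabel_mul_self : letterLabel x * letterLabel x = 1 := by
  funext ⟨i, j⟩
  cases i with
  | none => simp [letterLabel]
  | some i => by_cases hj : j = 2 <;> simp [letterLabel, hj, hx]

theorem letterLabel_triple :
    letterLabel x * (letterLabel x ∘ (permIndex (swap 1 2)).symm) *
      (letterLabel x ∘ (permIndex (swap 0 2)).symm) = 1 := by
  funext ⟨i, j⟩
  cases i with
  | none => simp [letterLabel, permIndex]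
  | some i => fin_cases j <;> simp [letterLabel, permIndex, hx, swap_apply_def]

theorem letterLabel_mul_swapLast [DecidableEq ι] (i : ι) (f : LetterPosition ι) :
    letterLabel x f * letterLabel x ((swapLast i).symm f) =
      if f.1 = some i ∧ f.2 ≠ 0 then x i else 1 := by
  obtain ⟨_ | i', j⟩ := f
  · simp [letterLabel, swapLast, swap_apply_def]
  · by_cases h : i' = i
    · subst h
      fin_cases j <;> simp [letterLabel, swapLast, swap_apply_def, hx]
    · by_cases hj : j = 2 <;> simp [letterLabel, swapLast, swap_apply_def, h, hx, hj]

theorem letterLabel_swapSpare [DecidableEq ι] (i : ι) :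
    (letterLabel x * (letterLabel x ∘ (swapLast i).symm)) ∘ (swapSpare i).symm =
      fun f => if isSpare f then x i else 1 := by
  funext ⟨i', j⟩
  simp only [Function.comp_apply, Pi.mul_apply, letterLabel_mul_swapLast hx]
  cases i' with
  | none => simp [swapSpare, isSpare]
  | some i' => by_cases h : i' = i <;> simp [swapSpare, isSpare, swap_apply_def, h]

end Labels

section AlternatingFrame

open Equiv

theorem flipPerm_isSpare_ne_one {ι E : Type*} : flipPerm E (isSpare (ι := ι)) ≠ 1 := by
  intro h
  simpa [flipPerm, isSpare] using DFunLike.congr_fun h (.inl (false, none, 1))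

variable (ι : Type*) [Fintype ι] [DecidableEq ι] (E : Type*) [Fintype E] [DecidableEq E]

/-- The points permuted by the alternating group of the frame: two copies of the letter positions
and a set `E` of extra points on which the generator of order three moves. -/
abbrev FramePoint := (Bool × LetterPosition ι) ⊕ E

theorem flipPerm_isSpare_mem_alternatingGroup :
    flipPerm E isSpare ∈ alternatingGroup (FramePoint ι E) := by
  rw [Perm.mem_alternatingGroup, sign_flipPerm]
  simp [Fintype.prod_prod_type, Fin.prod_univ_three, isSpare]

variable {ι E}

/-- Two copies of a permutation of the letter positions, as an even permutation. -/
def evenBlock (s : Perm (LetterPosition ι)) : alternatingGroup (FramePoint ι E) :=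
  ⟨blockPerm E s, blockPerm_mem_alternatingGroup s⟩

/-- The collapse frame on the alternating group of a prime number of points, generated by a cycle
through all points and a three-cycle of extra points. -/
def alternatingFrame (hprime : (Fintype.card (FramePoint ι E)).Prime) {p : Perm (FramePoint ι E)}
    {q : Perm E} (hpow : p ^ Fintype.card (FramePoint ι E) = 1)
    (hpA : p ∈ alternatingGroup (FramePoint ι E)) (hp : p.IsCycleOn Set.univ)
    (hq : (Perm.sumCongr (1 : Perm (Bool × LetterPosition ι)) q).IsThreeCycle) :
    CollapseFrame ι (alternatingGroup (FramePoint ι E)) where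
  a := ⟨p, hpA⟩
  b := ⟨_, hq.mem_alternatingGroup⟩
  period := Fintype.card (FramePoint ι E)
  period_pos := hprime.pos
  a_pow := Subtype.ext hpow
  b_pow := Subtype.ext <| (congrArg _ hq.orderOf).symm.trans <| pow_orderOf_eq_one _
  surjective_lift := lift_pair_surjective_of_closure_eq hpA hq.mem_alternatingGroup
    (closure_pair_eq_alternatingGroup hprime hpA hp hq)
  α := evenBlock (permIndex (swap 1 2))
  β := evenBlock (permIndex (swap 0 2))
  ω := ⟨flipPerm E isSpare, flipPerm_isSpare_mem_alternatingGroup ι E⟩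
  π i := evenBlock (swapLast i)
  μ i := evenBlock (swapSpare i)

variable {G Y : Type*} [Group G] (ρ : G →* Perm (Y × Bool)) (v : ι → G)

/-- The action of the alternating group on the second factor. -/
def evenSnd (Y : Type*) : alternatingGroup (FramePoint ι E) →* Perm (Y × FramePoint ι E) :=
  (permSnd Y _).comp (Subgroup.subtype _)

/-- The action of `G` through `ρ` at the two distinguished spare positions. -/
def spareHom (E : Type*) (ρ : G →* Perm (Y × Bool)) : G →* Perm (Y × FramePoint ι E) :=
  (labelPerm Y _ E).comp (MonoidHom.pi fun f => if isSpare f then ρ else 1)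

omit [Fintype ι] [DecidableEq ι] [Fintype E] [DecidableEq E] in
theorem spareHom_apply (g : G) :
    spareHom (ι := ι) E ρ g = labelPerm Y _ E fun f => if isSpare f then ρ g else 1 := by
  refine congrArg (labelPerm Y _ E) (funext fun f => ?_)
  by_cases hf : isSpare f <;> simp [hf]

theorem evenBlock_conj_labelPerm (s : Perm (LetterPosition ι))
    (F : LetterPosition ι → Perm (Y × Bool)) :
    evenSnd Y (evenBlock s) * labelPerm Y _ E F * (evenSnd Y (evenBlock s))⁻¹ =
      labelPerm Y _ E (F ∘ s.symm) :=
  blockPerm_conj_labelPerm s F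

variable {ρ v} {hprime : (Fintype.card (FramePoint ι E)).Prime} {p : Perm (FramePoint ι E)}
  {q : Perm E} {hpow : p ^ Fintype.card (FramePoint ι E) = 1}
  {hpA : p ∈ alternatingGroup (FramePoint ι E)} {hp : p.IsCycleOn Set.univ}
  {hq : (Perm.sumCongr (1 : Perm (Bool × LetterPosition ι)) q).IsThreeCycle}

theorem alternatingFrame_isModel (hv : ∀ i, v i * v i = 1) :
    (alternatingFrame hprime hpow hpA hp hq).IsModel v (evenSnd Y)
      (labelPerm Y _ E (letterLabel (ρ ∘ v))) (spareHom E ρ) := by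
  have hx (i : ι) : (ρ ∘ v) i * (ρ ∘ v) i = 1 := by
    rw [Function.comp_apply, ← map_mul, hv, map_one]
  refine ⟨?_, permSnd_sumCongr_one_commute_labelPerm q _, ?_, fun i => ?_⟩
  · rw [← map_mul, letterLabel_mul_self hx, map_one]
  · simp only [CollapseFrame.tripleVal, alternatingFrame, evenBlock_conj_labelPerm]
    rw [← map_mul, ← map_mul, letterLabel_triple hx, map_one]
  · simp only [CollapseFrame.letterVal, alternatingFrame, evenBlock_conj_labelPerm]
    rw [← map_mul, evenBlock_conj_labelPerm, letterLabel_swapSpare hx, spareHom_apply]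
    rfl

end AlternatingFrame

theorem exists_collapseFrame (ι : Type) [Finite ι] :
    ∃ (A : Type) (_ : Group A) (F : CollapseFrame ι A), Finite A ∧ IsSimpleGroup A ∧ F.ω ≠ 1 ∧
      ∀ {G : Type} [Group G] {v : ι → G} {w : G}, (∀ i, v i * v i = 1) → w ≠ 1 → w * w = 1 →
        ∃ (M : Type) (_ : Group M) (act : A →* M) (h : M) (D : G →* M),
          F.IsModel v act h D ∧ Function.Injective act ∧ D w = act F.ω := by
  classical
  have := Fintype.ofFinite ι
  obtain ⟨P, hle, hP⟩ := Nat.exists_infinite_primes (Fintype.card (Bool × LetterPosition ι) + 5)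
  obtain ⟨k, rfl⟩ := Nat.exists_eq_add_of_le ((Nat.le_add_right _ 5).trans hle)
  have hcard : Fintype.card (FramePoint ι (Fin k)) =
      Fintype.card (Bool × LetterPosition ι) + k := by simp
  have hfour : 4 < Fintype.card (FramePoint ι (Fin k)) := by omega
  have hodd : Odd (Fintype.card (FramePoint ι (Fin k))) :=
    hcard ▸ hP.odd_of_ne_two (by omega)
  obtain ⟨q, hq⟩ := exists_isThreeCycle_sumCongr (Bool × LetterPosition ι) (E := Fin k)
    (by rw [Fintype.card_fin]; omega)
  obtain ⟨p, hp, hpow⟩ := exists_isCycleOn_univ_pow_card_eq_one (FramePoint ι (Fin k))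
  refine ⟨alternatingGroup (FramePoint ι (Fin k)), inferInstance, alternatingFrame (hcard ▸ hP)
    hpow (mem_alternatingGroup_of_pow_eq_one hodd hpow) hp hq, inferInstance,
    alternatingGroup.isSimpleGroup (Nat.card_eq_fintype_card (α := FramePoint ι (Fin k)) ▸ hfour),
    fun h => flipPerm_isSpare_ne_one (Subtype.ext_iff.1 h), fun {G _ v w} hv hw hsq => ?_⟩
  obtain ⟨ρ, hρ⟩ := exists_hom_perm_prod_bool_of_involution hw hsq
  exact ⟨_, inferInstance, _, _, _, alternatingFrame_isModel hv,
    permSnd_injective.comp Subtype.val_injective,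
    (spareHom_apply ρ w).trans (permSnd_flipPerm isSpare hρ).symm⟩

section NormalGeneration

theorem normalClosure_eq_top_iff.{u} {G : Type u} [Group G] {S : Set G} :
    Subgroup.normalClosure S = ⊤ ↔
      ∀ (M : Type u) [Group M] (V : G →* M), (∀ w ∈ S, V w = 1) → V = 1 := by
  refine ⟨fun h M _ V hV => ?_, fun h => ?_⟩
  · rw [← MonoidHom.ker_eq_top_iff, eq_top_iff, ← h]
    exact Subgroup.normalClosure_le_normal hV
  · have hmk := h _ (QuotientGroup.mk' (Subgroup.normalClosure S)) fun w hw =>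
      (QuotientGroup.eq_one_iff w).2 (Subgroup.subset_normalClosure hw)
    rw [← QuotientGroup.ker_mk' (Subgroup.normalClosure S), hmk, MonoidHom.ker_one]

namespace CollapseFrame

variable {ι A : Type} [Group A] {F : CollapseFrame ι A} {rel : Set (FreeGroup ι)} {z : FreeGroup ι}

/-- The relators on two generators that say that the encoding of `z` is the code of `ω`, on top
of the relators of the frame and the encodings of `rel`. -/
def test (F : CollapseFrame ι A) (rel : Set (FreeGroup ι)) (z : FreeGroup ι) :
    Set (FreeGroup (Fin 2)) :=
  insert (F.encode z * (F.word F.ω)⁻¹) (F.relators ∪ F.encode '' rel)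

theorem normalClosure_test_eq_top [IsSimpleGroup A] (hω : F.ω ≠ 1)
    (hz : z ∈ Subgroup.normalClosure rel) : Subgroup.normalClosure (F.test rel z) = ⊤ := by
  rw [normalClosure_eq_top_iff]
  intro M _ V hV
  have hrel : Subgroup.normalClosure rel ≤ (V.comp F.encode).ker :=
    Subgroup.normalClosure_le_normal fun w hw => hV _ (Or.inr (Or.inr ⟨w, hw, rfl⟩))
  have hVz : V (F.encode z) = 1 := hrel hz
  have hVω : V (F.word F.ω) = 1 := by
    have h := hV _ (Set.mem_insert _ _)
    rwa [map_mul, hVz, one_mul, map_inv, inv_eq_one] at h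
  exact eq_one_of_relators hω (fun w hw => hV w (Or.inr (Or.inl hw))) hVω

theorem IsModel.normalClosure_test_ne_top {G M : Type} [Group G] [Group M] {v : ι → G}
    {act : A →* M} {h : M} {D : G →* M} (H : F.IsModel v act h D)
    (hact : Function.Injective act) (hω : F.ω ≠ 1) (hrel : ∀ w ∈ rel, FreeGroup.lift v w = 1)
    (hz : D (FreeGroup.lift v z) = act F.ω) : Subgroup.normalClosure (F.test rel z) ≠ ⊤ := by
  intro htop
  have hV : F.modelHom act h = 1 := by
    refine normalClosure_eq_top_iff.1 htop M _ ?_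
    rintro _ (rfl | hw | ⟨w, hw, rfl⟩)
    · rw [map_mul, map_inv, H.modelHom_encode, H.modelHom_word, hz, mul_inv_cancel]
    · exact H.modelHom_relators hw
    · rw [H.modelHom_encode, hrel w hw, map_one]
  have hact_ω : act F.ω = 1 := by rw [← H.modelHom_word, hV, MonoidHom.one_apply]
  exact hω (hact (hact_ω.trans (map_one act).symm))

end CollapseFrame

theorem exists_normalClosure_insert_eq_top_iff_eqvGen {I J : Type} [Finite I] [Finite J]
    (rules : J → ModularRule I) (i halt : I) :
    ∃ (c : Set (FreeGroup (Fin 2))) (W : FreeGroup (MachineGen I J) →* FreeGroup (Fin 2))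
      (C : FreeGroup (Fin 2)), c.Finite ∧ (∀ i, ∃ n, 0 < n ∧ FreeGroup.of i ^ n ∈ c) ∧ ∀ n : ℕ,
        Subgroup.normalClosure (insert (W (MachineGen.testVal FreeGroup.of i n) * C) c) = ⊤ ↔
          Relation.EqvGen (ModularRule.Step rules) (i, 0, n) (halt, 0, 0) := by
  obtain ⟨A, _, F, _, _, hω, hmodel⟩ := exists_collapseFrame (MachineGen I J)
  have hfin := MachineGen.relators_finite (v := FreeGroup.of) (rules := rules) (halt := halt)
  refine ⟨F.relators ∪ F.encode '' MachineGen.relators FreeGroup.of rules halt, F.encode,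
    (F.word F.ω)⁻¹, F.relators_finite.union (hfin.image _),
    fun k => (F.exists_pow_mem_relators k).imp fun n hn => ⟨hn.1, Or.inl hn.2⟩,
    fun n => ⟨fun htop => ?_, fun hn => CollapseFrame.normalClosure_test_eq_top hω
      (MachineGen.testVal_mem_normalClosure _ _ _ hn)⟩⟩
  by_contra hn
  obtain ⟨G, _, v, hv, hrep, hne, hsq⟩ := MachineGen.exists_involutive_rep_of_not_eqvGen hn
  obtain ⟨M, _, act, h, D, H, hact, hD⟩ := hmodel hv hne hsq
  have hv_of : FreeGroup.lift v ∘ FreeGroup.of = v := funext fun g => FreeGroup.lift_apply_of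
  refine H.normalClosure_test_ne_top hact hω
    ((MachineGen.map_relators_eq_one_iff _ _ _ _).2 (hv_of.symm ▸ hrep)) ?_ htop
  rw [MachineGen.map_testVal, hv_of, hD]

end NormalGeneration

/-! ### Turing machines -/

section TuringMachines

open Turing

/-- A numbering of a tape alphabet by the digits to a base, the blank being the digit `0`. It turns
half tapes into natural numbers, the cell next to the head being the least significant digit. -/
structure TapeCoding (Γ : Type*) [Inhabited Γ] where
  base : ℕ
  one_lt_base : 1 < base
  equiv : Γ ≃ Fin base
  equiv_default : (equiv default : ℕ) = 0

namespace TapeCoding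

section Digits

variable {Γ : Type*} [Inhabited Γ] (e : TapeCoding Γ)

theorem nonempty [Finite Γ] [Nontrivial Γ] : Nonempty (TapeCoding Γ) := by
  classical
  have := Fintype.ofFinite Γ
  let e₀ := Fintype.equivFin Γ
  exact ⟨{ base := Fintype.card Γ
           one_lt_base := Fintype.one_lt_card
           equiv := e₀.trans (Equiv.swap (e₀ default) ⟨0, Fintype.card_pos⟩)
           equiv_default := by simp }⟩

theorem base_pos : 0 < e.base := zero_lt_one.trans e.one_lt_base

/-- The digit of a tape symbol. -/
def digit (a : Γ) : ℕ := e.equiv a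

/-- The tape symbol whose digit is the remainder of `n` modulo the base. -/
def ofDigit (n : ℕ) : Γ := e.equiv.symm ⟨n % e.base, Nat.mod_lt n e.base_pos⟩

theorem digit_lt (a : Γ) : e.digit a < e.base := (e.equiv a).2

theorem digit_ofDigit (n : ℕ) : e.digit (e.ofDigit n) = n % e.base := by
  simp [digit, ofDigit]

theorem ofDigit_digit (a : Γ) : e.ofDigit (e.digit a) = a := by
  rw [ofDigit, Equiv.symm_apply_eq, Fin.ext_iff]
  exact Nat.mod_eq_of_lt (e.digit_lt a)

theorem digit_default : e.digit default = 0 := e.equiv_default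

/-- The half tape coded by a number. -/
def decode (n : ℕ) : ListBlank Γ := ListBlank.mk ((Nat.digits e.base n).map e.ofDigit)

/-- The number coding a half tape with finitely many non-blank cells. -/
def encode (l : List Γ) : ℕ := l.foldr (fun a n => e.digit a + e.base * n) 0

theorem decode_zero : e.decode 0 = ListBlank.mk [] := by
  simp [decode]

theorem decode_digit_add (a : Γ) (n : ℕ) :
    e.decode (e.digit a + e.base * n) = ListBlank.cons a (e.decode n) := by
  by_cases h : e.digit a ≠ 0 ∨ n ≠ 0
  · rw [decode, Nat.digits_add e.base e.one_lt_base _ n (e.digit_lt a) h, List.map_cons,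
      e.ofDigit_digit]
    rfl
  · obtain ⟨ha, rfl⟩ := not_or.1 h |>.imp not_not.1 not_not.1
    rw [← e.ofDigit_digit a, e.digit_ofDigit, ha, Nat.zero_mod, mul_zero, add_zero, e.decode_zero,
      ← e.digit_default, e.ofDigit_digit]
    exact (ListBlank.cons_head_tail (ListBlank.mk [])).symm

theorem decode_encode (l : List Γ) : e.decode (e.encode l) = ListBlank.mk l := by
  induction l with
  | nil => exact e.decode_zero
  | cons a l ih => exact (e.decode_digit_add a _).trans (congrArg (ListBlank.cons a) ih)

theorem exists_eq_digit_add (n : ℕ) : ∃ a k, n = e.digit a + e.base * k :=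
  ⟨e.ofDigit n, n / e.base, by rw [e.digit_ofDigit, Nat.mod_add_div]⟩

theorem nonneg_digit_add_iff (a : Γ) (n : ℤ) : 0 ≤ (e.digit a : ℤ) + e.base * n ↔ 0 ≤ n := by
  refine ⟨fun h => ?_, fun h => by positivity⟩
  have ha : (e.digit a : ℤ) < e.base := mod_cast e.digit_lt a
  by_contra! hn
  nlinarith

end Digits

section Simulation

variable {Γ Λ : Type*} [Inhabited Γ] [Inhabited Λ] (e : TapeCoding Γ) (M : TM0.Machine Γ Λ)

/-- The configuration in state `q` with the head on `γ` and half tapes coded by `u` and `v`. -/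
def cfg (q : Λ) (γ : Γ) (u v : ℕ) : TM0.Cfg Γ Λ := ⟨q, ⟨γ, e.decode u, e.decode v⟩⟩

/-- The modular machine simulating a Turing machine. The configuration `e.cfg q γ u v` becomes the
point `(some (q, γ), u, v)`, and halting configurations are led to the points `(none, u, v)`, all
of which the first two rules make equivalent. -/
def rules : Bool ⊕ (Λ × Γ × Γ) → ModularRule (Option (Λ × Γ))
  | .inl true => ⟨1, one_pos, none, 0, none, 1⟩
  | .inl false => ⟨1, one_pos, none, 1, none, 0⟩
  | .inr (q, γ, δ) =>
    match M q γ with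
    | none => ⟨1, one_pos, some (q, γ), 0, none, 0⟩
    | some (q', .write a) => ⟨1, one_pos, some (q, γ), 0, some (q', a), 0⟩
    | some (q', .move .right) =>
      ⟨e.base, e.base_pos, some (q, γ), e.digit δ, some (q', δ), e.digit γ⟩
    | some (q', .move .left) =>
      ⟨e.base, e.base_pos, some (q', δ), e.digit γ, some (q, γ), e.digit δ⟩

variable {M} {q q' : Λ} {γ : Γ}

theorem step_cfg_of_halt (hM : M q γ = none) (u v : ℕ) : TM0.step M (e.cfg q γ u v) = none := by
  simp only [TM0.step, cfg, hM, Option.map_none]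

theorem step_cfg_of_write {a : Γ} (hM : M q γ = some (q', .write a)) (u v : ℕ) :
    TM0.step M (e.cfg q γ u v) = some (e.cfg q' a u v) := by
  simp only [TM0.step, cfg, hM, Option.map_some, Tape.write]

theorem step_cfg_of_right (hM : M q γ = some (q', .move .right)) (δ : Γ) (u v : ℕ) :
    TM0.step M (e.cfg q γ u (e.digit δ + e.base * v)) =
      some (e.cfg q' δ (e.digit γ + e.base * u) v) := by
  simp only [TM0.step, cfg, hM, Option.map_some, Tape.move, decode_digit_add, ListBlank.head_cons,
    ListBlank.tail_cons]

theorem step_cfg_of_left (hM : M q γ = some (q', .move .left)) (δ : Γ) (u v : ℕ) :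
    TM0.step M (e.cfg q γ (e.digit δ + e.base * u) v) =
      some (e.cfg q' δ u (e.digit γ + e.base * v)) := by
  simp only [TM0.step, cfg, hM, Option.map_some, Tape.move, decode_digit_add, ListBlank.head_cons,
    ListBlank.tail_cons]

theorem rulesStep_none_left (u v : ℤ) :
    ModularRule.Step (e.rules M) (none, u, v) (none, u + 1, v) := by
  simpa [rules, add_comm] using ModularRule.Step.of (rules := e.rules M) (.inl true) u v

theorem rulesStep_none_right (v : ℤ) :
    ModularRule.Step (e.rules M) (none, 0, v + 1) (none, 0, v) := by
  simpa [rules, add_comm] using ModularRule.Step.of (rules := e.rules M) (.inl false) 0 v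

theorem rulesStep_of_halt (hM : M q γ = none) (u v : ℤ) :
    ModularRule.Step (e.rules M) (some (q, γ), u, v) (none, u, v) := by
  simpa [rules, hM] using ModularRule.Step.of (rules := e.rules M) (.inr (q, γ, γ)) u v

theorem rulesStep_of_write {a : Γ} (hM : M q γ = some (q', .write a)) (u v : ℤ) :
    ModularRule.Step (e.rules M) (some (q, γ), u, v) (some (q', a), u, v) := by
  simpa [rules, hM] using ModularRule.Step.of (rules := e.rules M) (.inr (q, γ, γ)) u v

theorem rulesStep_of_right (hM : M q γ = some (q', .move .right)) (δ : Γ) (u v : ℤ) :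
    ModularRule.Step (e.rules M) (some (q, γ), u, e.digit δ + e.base * v)
      (some (q', δ), e.digit γ + e.base * u, v) := by
  simpa [rules, hM] using ModularRule.Step.of (rules := e.rules M) (.inr (q, γ, δ)) u v

theorem rulesStep_of_left (hM : M q γ = some (q', .move .left)) (δ : Γ) (u v : ℤ) :
    ModularRule.Step (e.rules M) (some (q', δ), u, e.digit γ + e.base * v)
      (some (q, γ), e.digit δ + e.base * u, v) := by
  simpa [rules, hM] using ModularRule.Step.of (rules := e.rules M) (.inr (q, γ, δ)) u v

variable (M)

/-- The Turing machine halts on the configuration represented by a point, if there is one. -/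
def HaltsAt : Option (Λ × Γ) × ℤ × ℤ → Prop
  | (none, _, _) => True
  | (some (q, γ), u, v) =>
    0 ≤ u → 0 ≤ v → (StateTransition.eval (TM0.step M) (e.cfg q γ u.toNat v.toNat)).Dom

variable {M}

theorem haltsAt_natCast {u v : ℕ} : e.HaltsAt M (some (q, γ), u, v) ↔
    (StateTransition.eval (TM0.step M) (e.cfg q γ u v)).Dom := by
  simp [HaltsAt]

theorem eval_cfg_eq {c c' : TM0.Cfg Γ Λ} (h : TM0.step M c = some c') :
    StateTransition.eval (TM0.step M) c = StateTransition.eval (TM0.step M) c' :=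
  StateTransition.reaches_eval (.single h)

theorem toNat_digit_add (a : Γ) (n : ℕ) :
    ((e.digit a : ℤ) + e.base * n).toNat = e.digit a + e.base * n := by
  rw [← Nat.cast_mul, ← Nat.cast_add, Int.toNat_natCast]

theorem haltsAt_iff_of_write {a : Γ} (hM : M q γ = some (q', .write a)) (u v : ℤ) :
    e.HaltsAt M (some (q, γ), u, v) ↔ e.HaltsAt M (some (q', a), u, v) := by
  simp only [HaltsAt, eval_cfg_eq (e.step_cfg_of_write hM _ _)]

theorem haltsAt_iff_of_right (hM : M q γ = some (q', .move .right)) (δ : Γ) (u v : ℤ) :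
    e.HaltsAt M (some (q, γ), u, e.digit δ + e.base * v) ↔
      e.HaltsAt M (some (q', δ), e.digit γ + e.base * u, v) := by
  simp only [HaltsAt, nonneg_digit_add_iff]
  refine forall₂_congr fun hu hv => ?_
  lift u to ℕ using hu
  lift v to ℕ using hv
  simp only [toNat_digit_add, Int.toNat_natCast, eval_cfg_eq (e.step_cfg_of_right hM δ u v)]

theorem haltsAt_iff_of_left (hM : M q γ = some (q', .move .left)) (δ : Γ) (u v : ℤ) :
    e.HaltsAt M (some (q', δ), u, e.digit γ + e.base * v) ↔
      e.HaltsAt M (some (q, γ), e.digit δ + e.base * u, v) := by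
  simp only [HaltsAt, nonneg_digit_add_iff]
  refine forall₂_congr fun hu hv => ?_
  lift u to ℕ using hu
  lift v to ℕ using hv
  simp only [toNat_digit_add, Int.toNat_natCast, eval_cfg_eq (e.step_cfg_of_left hM δ u v)]

theorem haltsAt_of_halt (hM : M q γ = none) (u v : ℤ) : e.HaltsAt M (some (q, γ), u, v) :=
  fun _ _ => Part.dom_iff_mem.2
    ⟨_, StateTransition.mem_eval.2 ⟨.refl, e.step_cfg_of_halt hM _ _⟩⟩

theorem haltsAt_iff_of_step {p p' : Option (Λ × Γ) × ℤ × ℤ}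
    (h : ModularRule.Step (e.rules M) p p') : e.HaltsAt M p ↔ e.HaltsAt M p' := by
  obtain ⟨j, u, v⟩ := h
  rcases j with (_ | _) | ⟨q, γ, δ⟩
  · exact Iff.rfl
  · exact Iff.rfl
  rcases hM : M q γ with _ | ⟨q', (_ | _) | a⟩ <;> simp only [rules, hM]
  · exact iff_of_true (e.haltsAt_of_halt hM _ _) trivial
  · exact e.haltsAt_iff_of_left hM δ u v
  · exact e.haltsAt_iff_of_right hM δ u v
  · simpa using e.haltsAt_iff_of_write hM u v

variable (M) in
theorem eqvGen_rulesStep_none (u v : ℕ) :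
    Relation.EqvGen (ModularRule.Step (e.rules M)) (none, u, v) (none, 0, 0) := by
  induction u with
  | zero =>
    induction v with
    | zero => exact .refl _
    | succ v ih => exact .trans _ _ _ (.rel _ _ (mod_cast e.rulesStep_none_right v)) ih
  | succ u ih =>
    exact .trans _ _ _ (.symm _ _ (.rel _ _ (mod_cast e.rulesStep_none_left u v))) ih

theorem eqvGen_rulesStep_of_reaches {c b : TM0.Cfg Γ Λ}
    (h : StateTransition.Reaches (TM0.step M) c b) (hb : TM0.step M b = none) :
    ∀ (q : Λ) (γ : Γ) (u v : ℕ), c = e.cfg q γ u v →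
      Relation.EqvGen (ModularRule.Step (e.rules M)) (some (q, γ), u, v) (none, 0, 0) := by
  induction h using Relation.ReflTransGen.head_induction_on with
  | refl =>
    rintro q γ u v rfl
    have hM : M q γ = none := by simpa [TM0.step, cfg] using hb
    exact .trans _ _ _ (.rel _ _ (e.rulesStep_of_halt hM u v)) (e.eqvGen_rulesStep_none M u v)
  | head hstep _ ih =>
    rintro q γ u v rfl
    rcases hM : M q γ with _ | ⟨q', (_ | _) | a⟩
    · simp [e.step_cfg_of_halt hM] at hstep
    · obtain ⟨δ, u, rfl⟩ := e.exists_eq_digit_add u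
      rw [e.step_cfg_of_left hM, Option.mem_some_iff] at hstep
      have hrule := e.rulesStep_of_left hM δ u v
      exact .trans _ _ _ (.symm _ _ (.rel _ _ (mod_cast hrule))) (ih _ _ _ _ hstep.symm)
    · obtain ⟨δ, v, rfl⟩ := e.exists_eq_digit_add v
      rw [e.step_cfg_of_right hM, Option.mem_some_iff] at hstep
      have hrule := e.rulesStep_of_right hM δ u v
      exact .trans _ _ _ (.rel _ _ (mod_cast hrule)) (ih _ _ _ _ hstep.symm)
    · rw [e.step_cfg_of_write hM, Option.mem_some_iff] at hstep
      exact .trans _ _ _ (.rel _ _ (e.rulesStep_of_write hM u v)) (ih _ _ _ _ hstep.symm)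

theorem eval_dom_iff_eqvGen_rulesStep (q : Λ) (γ : Γ) (l : List Γ) :
    (StateTransition.eval (TM0.step M) ⟨q, Tape.mk₁ (γ :: l)⟩).Dom ↔
      Relation.EqvGen (ModularRule.Step (e.rules M)) (some (q, γ), 0, e.encode l) (none, 0, 0) := by
  have hcfg : (⟨q, Tape.mk₁ (γ :: l)⟩ : TM0.Cfg Γ Λ) = e.cfg q γ 0 (e.encode l) := by
    rw [cfg, e.decode_encode, e.decode_zero]
    rfl
  rw [hcfg]
  constructor
  · intro h
    obtain ⟨b, hb⟩ := Part.dom_iff_mem.1 h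
    obtain ⟨hreach, hhalt⟩ := StateTransition.mem_eval.1 hb
    simpa using e.eqvGen_rulesStep_of_reaches hreach hhalt q γ 0 _ rfl
  · intro h
    have hhalts : e.HaltsAt M (some (q, γ), 0, e.encode l) :=
      (iff_of_eqvGen (fun _ _ hstep => e.haltsAt_iff_of_step hstep) h).2 trivial
    exact e.haltsAt_natCast.1 (by simpa using hhalts)

end Simulation

end TapeCoding

end TuringMachines

section Machines

open Turing

theorem exists_finite_tm0_of_supports {Γ Λ : Type*} [Inhabited Γ] [Inhabited Λ]
    (M : TM0.Machine Γ Λ) {S : Finset Λ} (hS : TM0.Supports M (S : Set Λ)) :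
    ∃ (_ : Inhabited S) (M' : TM0.Machine Γ S), ∀ l,
      (StateTransition.eval (TM0.step M') (TM0.init l)).Dom ↔
        (StateTransition.eval (TM0.step M) (TM0.init l)).Dom := by
  classical
  have hdefault : default ∈ S := Finset.mem_coe.1 hS.1
  let := (⟨⟨default, hdefault⟩⟩ : Inhabited S)
  let sym : PointedMap Γ Γ := ⟨id, rfl⟩
  let restrict : PointedMap Λ S :=
    ⟨fun q => if h : q ∈ S then ⟨q, h⟩ else default, dif_pos hdefault⟩
  have hrestrict : ∀ q ∈ (S : Set Λ), (restrict q : Λ) = q := fun q hq =>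
    congrArg Subtype.val (dif_pos (Finset.mem_coe.1 hq))
  refine ⟨inferInstance, M.map sym sym restrict Subtype.val, fun l =>
    StateTransition.tr_eval_dom
      (TM0.Machine.map_respects M sym sym restrict Subtype.val hS (fun _ => rfl) hrestrict)
      ⟨hS.1, ?_⟩⟩
  rw [TM0.map_init]
  exact congrArg TM0.init (List.map_id l)

theorem exists_finite_tm0_eval_dom_iff_tm2 {K : Type} [DecidableEq K] {Γ : K → Type}
    {Λ σ : Type} [Inhabited Λ] [Inhabited σ] [Finite σ] (M : Λ → TM2.Stmt Γ Λ σ) {S : Finset Λ}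
    (hS : TM2.Supports M S) (k : K) :
    ∃ (Λ' : Type) (_ : Inhabited Λ') (_ : Finite Λ') (M' : TM0.Machine (TM2to1.Γ' K Γ) Λ'),
      ∀ l, (StateTransition.eval (TM0.step M') (TM0.init (TM2to1.trInit k l))).Dom ↔
        (TM2.eval M k l).Dom := by
  classical
  have := Fintype.ofFinite σ
  obtain ⟨_, M', hM'⟩ :=
    exists_finite_tm0_of_supports _ (TM1to0.tr_supports _ (TM2to1.tr_supports _ hS))
  refine ⟨_, inferInstance, inferInstance, M', fun l => (hM' _).trans ?_⟩
  rw [← TM2to1.tr_eval_dom, ← TM1to0.tr_eval]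
  rfl

theorem trNat_two_pow (n : ℕ) : PartrecToTM2.trNat (2 ^ n) =
    List.replicate n PartrecToTM2.Γ'.bit0 ++ [PartrecToTM2.Γ'.bit1] := by
  suffices ∃ p : PosNum, ((2 ^ n : ℕ) : Num) = .pos p ∧ PartrecToTM2.trPosNum p =
      List.replicate n PartrecToTM2.Γ'.bit0 ++ [PartrecToTM2.Γ'.bit1] by
    obtain ⟨p, hp, htr⟩ := this
    rw [PartrecToTM2.trNat, hp, PartrecToTM2.trNum, htr]
  induction n with
  | zero => exact ⟨.one, rfl, rfl⟩
  | succ n ih =>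
    obtain ⟨p, hp, htr⟩ := ih
    refine ⟨.bit0 p, ?_, by rw [PartrecToTM2.trPosNum, htr, List.replicate_succ, List.cons_append]⟩
    rw [pow_succ, mul_two, Nat.cast_add, hp, Num.bit0_of_bit0]
    rfl

theorem tm2Eval_tr_dom_iff (c : ToPartrec.Code) (v : List ℕ) :
    letI : Inhabited PartrecToTM2.Λ' := ⟨PartrecToTM2.trNormal c .halt⟩
    (TM2.eval PartrecToTM2.tr .main (PartrecToTM2.trList v)).Dom ↔ (c.eval v).Dom := by
  let : Inhabited PartrecToTM2.Λ' := ⟨PartrecToTM2.trNormal c .halt⟩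
  have hinit : PartrecToTM2.init c v = TM2.init (Γ := fun _ => PartrecToTM2.Γ') .main
      (PartrecToTM2.trList v) := by
    rw [PartrecToTM2.init, TM2.init]
    congr 1
    funext k
    cases k <;> simp
  change (StateTransition.eval (TM2.step PartrecToTM2.tr)
    (TM2.init (Γ := fun _ => PartrecToTM2.Γ') .main (PartrecToTM2.trList v))).Dom ↔ _
  rw [← hinit, PartrecToTM2.tr_eval]
  rfl

instance : Finite PartrecToTM2.K' :=
  .of_surjective ![.main, .rev, .aux, .stack] <| by
    rintro (_ | _ | _ | _)
    exacts [⟨0, rfl⟩, ⟨1, rfl⟩, ⟨2, rfl⟩, ⟨3, rfl⟩]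

theorem exists_tm0_eval_dom_iff_code (c : ToPartrec.Code) :
    ∃ (Γ Λ : Type) (_ : Inhabited Γ) (_ : Inhabited Λ) (_ : Finite Γ) (_ : Nontrivial Γ)
      (_ : Finite Λ) (M : TM0.Machine Γ Λ) (γ s₀ s₁ : Γ), ∀ n : ℕ,
      (StateTransition.eval (TM0.step M) (TM0.init (γ :: s₁ :: List.replicate n s₀))).Dom ↔
        (c.eval [2 ^ n]).Dom := by
  classical
  let : Inhabited PartrecToTM2.Λ' := ⟨PartrecToTM2.trNormal c .halt⟩
  obtain ⟨Λ, _, _, M, hM⟩ :=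
    exists_finite_tm0_eval_dom_iff_tm2 _ (PartrecToTM2.tr_supports c .halt) .main
  let symbol (bottom : Bool) (a : PartrecToTM2.Γ') :
      TM2to1.Γ' PartrecToTM2.K' (fun _ => PartrecToTM2.Γ') :=
    (bottom, Function.update (fun _ => none) .main (some a))
  refine ⟨TM2to1.Γ' PartrecToTM2.K' (fun _ => PartrecToTM2.Γ'), Λ, inferInstance, inferInstance,
    inferInstanceAs (Finite (Bool × (PartrecToTM2.K' → Option PartrecToTM2.Γ'))),
    inferInstanceAs (Nontrivial (Bool × (PartrecToTM2.K' → Option PartrecToTM2.Γ'))),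
    inferInstance, M, symbol true .cons, symbol false .bit0, symbol false .bit1, fun n => ?_⟩
  have hinit : TM2to1.trInit .main (PartrecToTM2.trList [2 ^ n]) =
      symbol true .cons :: symbol false .bit1 :: List.replicate n (symbol false .bit0) := by
    have hrev : (PartrecToTM2.trList [2 ^ n]).reverse =
        .cons :: .bit1 :: List.replicate n PartrecToTM2.Γ'.bit0 := by
      simp [PartrecToTM2.trList, trNat_two_pow]
    rw [TM2to1.trInit, hrev]
    exact congrArg (symbol true .cons :: symbol false .bit1 :: ·) List.map_replicate
  rw [← hinit, hM, tm2Eval_tr_dom_iff]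

theorem primrec_two_pow : Primrec fun n : ℕ => 2 ^ n := by
  refine (Primrec.nat_rec₁ 1 (f := fun _ k => 2 * k)
    (Primrec.nat_mul.comp (.const 2) .snd)).of_eq fun n => ?_
  induction n with
  | zero => rfl
  | succ n ih => rw [pow_succ', ← ih]

theorem rfind_decide_eq (n : ℕ) :
    Nat.rfind (fun k => Part.some (decide (k = n))) = Part.some n :=
  Part.eq_some_iff.2 (Nat.mem_rfind.2 ⟨by simp, fun hk => by simp [hk.ne]⟩)

theorem exists_code_eval_two_pow_dom_iff {p : ℕ → Prop} (hp : REPred p) :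
    ∃ c : ToPartrec.Code, ∀ n, (c.eval [2 ^ n]).Dom ↔ p n := by
  have hlog : Partrec fun v : ℕ => Nat.rfind fun k => Part.some (decide (2 ^ k = v)) := by
    have : Primrec₂ fun v k : ℕ => decide (2 ^ k = v) :=
      (Primrec.eq.comp (primrec_two_pow.comp .snd) .fst).decide
    exact .rfind (Computable₂.partrec₂ this.to_comp)
  have htest : Partrec₂ fun _ k : ℕ => (Part.assert (p k) fun _ => Part.some ()).map fun _ => 0 :=
    (hp.comp Computable.snd).map (Computable.const 0).to₂
  obtain ⟨c, hc⟩ := ToPartrec.Code.exists_code (Nat.Partrec'.part_iff₁.2 (hlog.bind htest))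
  refine ⟨c, fun n => ?_⟩
  have heval := hc (2 ^ n ::ᵥ .nil)
  rw [show (2 ^ n ::ᵥ .nil : List.Vector ℕ 1).1 = [2 ^ n] from rfl] at heval
  rw [heval]
  simp [rfind_decide_eq, Part.bind_some, Part.assert]

theorem primrec_encode_replicate {Γ : Type*} [Inhabited Γ] (e : TapeCoding Γ) (a : Γ) :
    Primrec fun n : ℕ => e.encode (List.replicate n a) := by
  refine (Primrec.nat_rec₁ 0 (f := fun _ k => e.digit a + e.base * k)
    (Primrec.nat_add.comp (.const _) (Primrec.nat_mul.comp (.const _) .snd))).of_eq fun n => ?_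
  induction n with
  | zero => rfl
  | succ n ih => simp only [ih, List.replicate_succ, TapeCoding.encode, List.foldr_cons]

theorem exists_modularRules_of_rePred {p : ℕ → Prop} (hp : REPred p) :
    ∃ (I J : Type) (_ : Finite I) (_ : Finite J) (rules : J → ModularRule I) (i halt : I)
      (f : ℕ → ℕ), Computable f ∧
        ∀ n, p n ↔ Relation.EqvGen (ModularRule.Step rules) (i, 0, f n) (halt, 0, 0) := by
  obtain ⟨c, hc⟩ := exists_code_eval_two_pow_dom_iff hp
  obtain ⟨Γ, Λ, _, _, _, _, _, M, γ, s₀, s₁, hM⟩ := exists_tm0_eval_dom_iff_code c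
  obtain ⟨e⟩ := TapeCoding.nonempty (Γ := Γ)
  refine ⟨_, _, inferInstance, inferInstance, e.rules M, some (default, γ), none,
    fun n => e.encode (s₁ :: List.replicate n s₀), ?_, fun n => ?_⟩
  · exact (Primrec.nat_add.comp (.const (e.digit s₁)) (Primrec.nat_mul.comp (.const e.base)
      (primrec_encode_replicate e s₀))).to_comp
  · rw [← hc, ← hM, ← e.eval_dom_iff_eqvGen_rulesStep]
    rfl

end Machines

/-! ### Computable sequences of words -/

/-- A sequence of elements of a free group is computable if words representing it can be computed.
Since there is no encoding of words over an arbitrary `Z`, this is asked of all images in free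
groups over the types `Fin N`. -/
def IsComputableSeq {Z : Type*} (w : ℕ → FreeGroup Z) : Prop :=
  ∀ (N : ℕ) (φ : FreeGroup Z →* FreeGroup (Fin N)),
    ∃ f : ℕ → List (Fin N × Bool), Computable f ∧ ∀ n, FreeGroup.mk (f n) = φ (w n)

namespace IsComputableSeq

open scoped commutatorElement

variable {Z Z' : Type*} {v w : ℕ → FreeGroup Z}

theorem const (g : FreeGroup Z) : IsComputableSeq fun _ => g := fun _ φ =>
  ⟨fun _ => (φ g).toWord, Computable.const _, fun _ => FreeGroup.mk_toWord⟩

theorem map (hw : IsComputableSeq w) (φ : FreeGroup Z →* FreeGroup Z') :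
    IsComputableSeq fun n => φ (w n) := fun N ψ => hw N (ψ.comp φ)

theorem mul (hv : IsComputableSeq v) (hw : IsComputableSeq w) :
    IsComputableSeq fun n => v n * w n := by
  intro N φ
  obtain ⟨f, hf, hfv⟩ := hv N φ
  obtain ⟨g, hg, hgw⟩ := hw N φ
  exact ⟨fun n => f n ++ g n, Computable.list_append.comp hf hg, fun n => by
    rw [← FreeGroup.mul_mk, hfv, hgw, map_mul]⟩

theorem inv (hw : IsComputableSeq w) : IsComputableSeq fun n => (w n)⁻¹ := by
  intro N φ
  obtain ⟨f, hf, hfw⟩ := hw N φ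
  have hinvRev : Computable (FreeGroup.invRev : List (Fin N × Bool) → _) :=
    (Primrec.list_reverse.comp (Primrec.list_map .id ((Primrec.fst.comp .snd).pair
      (Primrec.not.comp (Primrec.snd.comp .snd))).to₂)).to_comp
  exact ⟨fun n => FreeGroup.invRev (f n), hinvRev.comp hf, fun n => by
    rw [← FreeGroup.inv_mk, hfw, map_inv]⟩

theorem const_pow (g : FreeGroup Z) {e : ℕ → ℕ} (he : Computable e) :
    IsComputableSeq fun n => g ^ e n := by
  intro N φ
  have hpow (k : ℕ) : FreeGroup.mk (k.rec [] fun _ l => (φ g).toWord ++ l) = φ g ^ k := by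
    induction k with
    | zero => rfl
    | succ k ih => rw [← FreeGroup.mul_mk, ih, FreeGroup.mk_toWord, pow_succ']
  exact ⟨_, (Primrec.nat_rec₁ [] (f := fun _ l => (φ g).toWord ++ l)
    (Primrec.list_append.comp (.const _) .snd)).to_comp.comp he,
    fun n => by rw [hpow, map_pow]⟩

theorem testVal {I J : Type*} (u : MachineGen I J → FreeGroup Z) (i : I) {e : ℕ → ℕ}
    (he : Computable e) : IsComputableSeq fun n => MachineGen.testVal u i (e n) := by
  have hpow := const_pow (MachineGen.yVal u) he
  have hconj := (hpow.inv.mul (const (u (.t i)))).mul hpow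
  have hk := const (u .k)
  simpa only [MachineGen.testVal, commutatorElement_def] using
    ((hconj.mul hk).mul hconj.inv).mul hk.inv

end IsComputableSeq

theorem exists_normalClosure_insert_eq_top_iff_of_rePred {p : ℕ → Prop} (hp : REPred p) :
    ∃ (c : Set (FreeGroup (Fin 2))) (w : ℕ → FreeGroup (Fin 2)), c.Finite ∧
      (∀ i, ∃ n, 0 < n ∧ FreeGroup.of i ^ n ∈ c) ∧ IsComputableSeq w ∧
      ∀ n, Subgroup.normalClosure (insert (w n) c) = ⊤ ↔ p n := by
  obtain ⟨I, J, _, _, rules, i, halt, e, he, hrules⟩ := exists_modularRules_of_rePred hp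
  obtain ⟨c, W, C, hc, hpow, hiff⟩ := exists_normalClosure_insert_eq_top_iff_eqvGen rules i halt
  exact ⟨c, fun n => W (MachineGen.testVal FreeGroup.of i (e n)) * C, hc, hpow,
    ((IsComputableSeq.testVal FreeGroup.of i he).map W).mul (.const C),
    fun n => (hiff (e n)).trans (hrules n).symm⟩

/-! ### Splittings -/

section CommutationInFreeGroups

theorem not_commute_of_of_toWord_eq_cons {ι : Type*} [DecidableEq ι] {z : FreeGroup ι} {i k : ι}
    {b : Bool} {L : List (ι × Bool)} (hz : z.toWord = (k, b) :: L) (hk : k ≠ i) :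
    ¬ Commute z (FreeGroup.of i) := by
  intro h
  have hword : (FreeGroup.of i * z).toWord = (i, true) :: (k, b) :: L := by
    rw [FreeGroup.toWord_mul, FreeGroup.toWord_of, List.singleton_append, FreeGroup.reduce.cons,
      FreeGroup.reduce_toWord, hz]
    simp [hk.symm]
  have hsub : ((i, true) :: (k, b) :: L).Sublist ((k, b) :: L ++ [(i, true)]) := by
    simpa only [h.eq, hword, hz, FreeGroup.toWord_of] using
      FreeGroup.toWord_mul_sublist z (FreeGroup.of i)
  have heq := hsub.eq_of_length (by simp)
  simp only [List.cons_append, List.cons.injEq, Prod.mk.injEq] at heq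
  exact hk heq.1.1.symm

theorem eq_one_of_commute_of_of {ι : Type*} {z : FreeGroup ι} {i j : ι} (hij : i ≠ j)
    (hi : Commute z (FreeGroup.of i)) (hj : Commute z (FreeGroup.of j)) : z = 1 := by
  classical
  rcases hz : z.toWord with _ | ⟨⟨k, b⟩, L⟩
  · exact FreeGroup.toWord_eq_nil_iff.1 hz
  · by_cases hk : k = i
    · exact absurd hj (not_commute_of_of_toWord_eq_cons hz (hk ▸ hij))
    · exact absurd hi (not_commute_of_of_toWord_eq_cons hz hk)

variable {F : Type*} [Group F] [IsFreeGroup F]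

theorem isCyclic_of_forall_commute {z : F} (hz : z ≠ 1) (hcomm : ∀ h, Commute z h) :
    IsCyclic F := by
  let e := IsFreeGroup.toFreeGroup F
  have hez : e z ≠ 1 := by rwa [Ne, EmbeddingLike.map_eq_one_iff]
  have hcomm' (w : FreeGroup (IsFreeGroup.Generators F)) : Commute (e z) w := by
    simpa using (hcomm (e.symm w)).map e
  have hsub : Subsingleton (IsFreeGroup.Generators F) :=
    ⟨fun i j => by_contra fun hij => hez (eq_one_of_commute_of_of hij (hcomm' _) (hcomm' _))⟩
  rcases isEmpty_or_nonempty (IsFreeGroup.Generators F) with _ | ⟨⟨i⟩⟩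
  · exact absurd (Subsingleton.elim _ _) hez
  · let : Unique (IsFreeGroup.Generators F) := uniqueOfSubsingleton i
    exact e.isCyclic.2 inferInstance

theorem isCyclic_centralizer_singleton {g : F} (hg : g ≠ 1) :
    IsCyclic (Subgroup.centralizer {g}) :=
  isCyclic_of_forall_commute
    (z := (⟨g, Subgroup.mem_centralizer_singleton_iff.2 rfl⟩ : Subgroup.centralizer {g}))
    (fun h => hg (congrArg Subtype.val h))
    fun h => Subtype.ext (Subgroup.mem_centralizer_singleton_iff.1 h.2).symm

theorem commute_of_commute_of_ne_one {a b c : F} (hb : b ≠ 1) (hab : Commute a b)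
    (hbc : Commute b c) : Commute a c := by
  have := isCyclic_centralizer_singleton hb
  exact congrArg Subtype.val (IsMulCommutative.is_comm.comm
    (⟨a, Subgroup.mem_centralizer_singleton_iff.2 hab⟩ : Subgroup.centralizer {b})
    ⟨c, Subgroup.mem_centralizer_singleton_iff.2 hbc.symm⟩)

theorem exists_conj_eq_zpow_of_commute_conj {g x : F} (hg : g ≠ 1)
    (h : Commute g (x * g * x⁻¹)) : ∃ n : ℤ, x * g * x⁻¹ = g ^ n := by
  obtain ⟨⟨c, hc⟩, hgen⟩ := isCyclic_centralizer_singleton hg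
  have hgc : Commute g c := (Subgroup.mem_centralizer_singleton_iff.1 hc).symm
  have hconj : Commute g (x * c * x⁻¹) :=
    commute_of_commute_of_ne_one (by rwa [Ne, conj_eq_one_iff]) h
      (by simpa using hgc.map (MulAut.conj x))
  obtain ⟨k, hk⟩ := hgen ⟨g, Subgroup.mem_centralizer_singleton_iff.2 rfl⟩
  obtain ⟨n, hn⟩ := hgen ⟨_, Subgroup.mem_centralizer_singleton_iff.2 hconj.symm⟩
  replace hk : c ^ k = g := congrArg Subtype.val hk
  replace hn : c ^ n = x * c * x⁻¹ := congrArg Subtype.val hn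
  exact ⟨n, by rw [← hk, ← conj_zpow, ← hn, zpow_comm]⟩

/- Conjugation by `x` and by `x⁻¹` raises `g` to powers `p` and `q` with `p * q = 1`, so `x ^ 2`
commutes with `g`. -/
theorem commute_of_commute_conj {g x : F} (hg : g ≠ 1) (h : Commute g (x * g * x⁻¹)) :
    Commute g x := by
  have : IsMulTorsionFree F :=
    (IsFreeGroup.toFreeGroup F).injective.isMulTorsionFree (IsFreeGroup.toFreeGroup F).toMonoidHom
  obtain ⟨p, hp⟩ := exists_conj_eq_zpow_of_commute_conj hg h
  have hinv : Commute g (x⁻¹ * g * x⁻¹⁻¹) := by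
    simpa [mul_assoc] using (h.map (MulAut.conj x⁻¹)).symm
  obtain ⟨q, hq⟩ := exists_conj_eq_zpow_of_commute_conj hg hinv
  have hqp : g ^ (q * p) = g := by
    rw [zpow_mul, ← hq, conj_zpow, ← hp]
    group
  have hunit : q * p = 1 := sub_eq_zero.1 <| (IsMulTorsionFree.zpow_eq_one_iff_right hg).1 <| by
    rw [zpow_sub_one, hqp, mul_inv_cancel]
  have hpp : p * p = 1 := by
    rcases Int.eq_one_or_neg_one_of_mul_eq_one' hunit with ⟨-, rfl⟩ | ⟨-, rfl⟩ <;> rfl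
  have hsq : x ^ 2 * g * (x ^ 2)⁻¹ = g :=
    calc
      x ^ 2 * g * (x ^ 2)⁻¹ = x * (x * g * x⁻¹) * x⁻¹ := by
        simp only [sq, mul_inv_rev, mul_assoc]
      _ = g := by rw [hp, ← conj_zpow, hp, ← zpow_mul, hpp, zpow_one]
  by_cases hx : x = 1
  · exact hx ▸ Commute.one_right g
  · exact commute_of_commute_of_ne_one (mt (pow_eq_one_iff_left two_ne_zero).1 hx)
      (mul_inv_eq_iff_eq_mul.1 hsq).symm (Commute.pow_self x 2)

end CommutationInFreeGroups

section TrivialFreeCentralizers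

/-- Centralizers of non-cyclic free subgroups of `Q` are trivial. -/
def HasTrivialFreeCentralizers (Q : Type*) [Group Q] : Prop :=
  ∀ H : Subgroup Q, IsFreeGroup H → ¬ IsCyclic H → Subgroup.centralizer (H : Set Q) = ⊥

theorem not_isCyclic_freeGroup (ι : Type*) [Nontrivial ι] : ¬ IsCyclic (FreeGroup ι) := by
  intro _
  obtain ⟨i, j, hij⟩ := exists_pair_ne ι
  exact FreeGroup.of_ne_one i (eq_one_of_commute_of_of hij (Commute.refl _)
    (IsMulCommutative.is_comm.comm _ _))

theorem exists_comp_eq_id_of_surjective {E K : Type*} [Group E] [Group K] [IsFreeGroup K]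
    {f : E →* K} (hf : Function.Surjective f) : ∃ s : K →* E, f.comp s = MonoidHom.id K := by
  choose σ hσ using hf
  exact ⟨IsFreeGroup.lift fun i => σ (IsFreeGroup.of i), IsFreeGroup.ext_hom fun i => by simp [hσ]⟩

variable {Q F : Type*} [Group Q] [Group F] [IsFreeGroup F]

/- The centralizer of `z` maps onto a free group containing `θ a` and `θ b`; a section embeds that
free group into the centralizer, so it is centralized by `z`. -/
theorem HasTrivialFreeCentralizers.eq_one_of_commute (hQ : HasTrivialFreeCentralizers Q)
    (θ : Q →* F) {a b z : Q} (hab : ¬ Commute (θ a) (θ b)) (hza : Commute z a)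
    (hzb : Commute z b) : z = 1 := by
  let E := Subgroup.centralizer {z}
  have hmem {h : Q} (hzh : Commute z h) : θ h ∈ E.map θ :=
    ⟨h, Subgroup.mem_centralizer_singleton_iff.2 hzh.symm, rfl⟩
  obtain ⟨s, hs⟩ := exists_comp_eq_id_of_surjective (θ.subgroupMap_surjective E)
  have hinj : Function.Injective (E.subtype.comp s) :=
    E.subtype_injective.comp (Function.LeftInverse.injective (g := θ.subgroupMap E)
      (DFunLike.congr_fun hs))
  let e := MonoidHom.ofInjective hinj
  have hcyc : ¬ IsCyclic (E.subtype.comp s).range := by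
    intro hcyc
    have := e.isCyclic.2 hcyc
    exact hab (congrArg Subtype.val (IsMulCommutative.is_comm.comm
      (⟨θ a, hmem hza⟩ : E.map θ) ⟨θ b, hmem hzb⟩))
  have hz : z ∈ Subgroup.centralizer ((E.subtype.comp s).range : Set Q) := by
    rintro _ ⟨k, rfl⟩
    exact Subgroup.mem_centralizer_singleton_iff.1 (s k).2
  rwa [hQ _ (IsFreeGroup.ofMulEquiv e) hcyc] at hz

end TrivialFreeCentralizers

section Splittings

variable {Q G G' F J : Type*} [Group Q] [Group G] [Group G'] [Group F] [IsFreeGroup F] {m : ℕ}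
  {T : Set Q} {r : J → Q} {α : Q →* G} {ε : J → Fin m → G}

/-- The family `ε` splits the image under `α` of every `r j` into `m` factors, in such a way that
`T`-conjugates of factors with different indices commute, and that the factors generate `G`
together with the image of `α`. The model case is the diagonal map `Q → Q ^ m`, each `r j` being
split into its copies in the factors of `Q ^ m`. -/
structure IsSplitting (T : Set Q) (r : J → Q) (α : Q →* G) (ε : J → Fin m → G) : Prop where
  map_eq_prod : ∀ j, α (r j) = (List.ofFn (ε j)).prod
  commute : ∀ ⦃i i'⦄, i ≠ i' → ∀ j j', ∀ u ∈ T, ∀ v ∈ T,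
    Commute (α u * ε j i * (α u)⁻¹) (α v * ε j' i' * (α v)⁻¹)
  closure_eq_top : Subgroup.closure (Set.range α ∪ Set.range (Function.uncurry ε)) = ⊤

theorem prod_ofFn_eq_of_forall_ne {M : Type*} [Monoid M] {f : Fin m → M} (i : Fin m)
    (h : ∀ i' ≠ i, f i' = 1) : (List.ofFn f).prod = f i := by
  rw [List.ofFn_eq_map, List.prod_map_eq_pow_single i f fun i' hi' _ => h i' hi',
    List.count_eq_one_of_mem (List.nodup_finRange m) (List.mem_finRange i), pow_one]

namespace IsSplitting

theorem map (h : IsSplitting T r α ε) {f : G →* G'} (hf : Function.Surjective f) :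
    IsSplitting T r (f.comp α) fun j i => f (ε j i) where
  map_eq_prod j := by
    rw [MonoidHom.comp_apply, h.map_eq_prod, map_list_prod, List.map_ofFn]
    rfl
  commute i i' hi j j' u hu v hv := by
    simpa only [MonoidHom.comp_apply, map_mul, map_inv] using (h.commute hi j j' u hu v hv).map f
  closure_eq_top := by
    have := congrArg (Subgroup.map f) h.closure_eq_top
    rwa [MonoidHom.map_closure, Subgroup.map_top_of_surjective f hf, Set.image_union,
      ← Set.range_comp, ← Set.range_comp] at this

theorem mem_of_forall_mem (h : IsSplitting T r α ε) {S : Subgroup G} (hα : ∀ q, α q ∈ S)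
    (hε : ∀ j i, ε j i ∈ S) (g : G) : g ∈ S := by
  have : Subgroup.closure (Set.range α ∪ Set.range (Function.uncurry ε)) ≤ S := by
    rw [Subgroup.closure_le, Set.union_subset_iff, Set.range_subset_iff, Set.range_subset_iff]
    exact ⟨hα, fun p => hε p.1 p.2⟩
  exact this (h.closure_eq_top ▸ Subgroup.mem_top g)

theorem hom_ext (h : IsSplitting T r α ε) {f g : G →* G'} (hα : ∀ q, f (α q) = g (α q))
    (hε : ∀ j i, f (ε j i) = g (ε j i)) : f = g :=
  MonoidHom.ext (h.mem_of_forall_mem (S := f.eqLocus g) hα hε)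

theorem eq_one_of_forall_commute {α : Q →* F} {ε : J → Fin m → F} (h : IsSplitting T r α ε)
    (hT1 : 1 ∈ T) (hT : Subgroup.closure T = ⊤) (hF : ¬ IsCyclic F)
    (hcomm : ∀ i j j', ∀ u ∈ T, ∀ v ∈ T,
      Commute (α u * ε j i * (α u)⁻¹) (α v * ε j' i * (α v)⁻¹)) (j : J) (i : Fin m) :
    ε j i = 1 := by
  by_contra hne
  have hconj (i' j' v) (hv : v ∈ T) : Commute (ε j i) (α v * ε j' i' * (α v)⁻¹) := by
    rcases eq_or_ne i i' with rfl | hi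
    · simpa using hcomm i j j' 1 hT1 v hv
    · simpa using h.commute hi j j' 1 hT1 v hv
  have hα : ((MulAut.conj (ε j i)).toMonoidHom.comp α) = α :=
    MonoidHom.eq_of_eqOn_dense hT fun u hu =>
      mul_inv_eq_of_eq_mul (commute_of_commute_conj hne (hconj i j u hu))
  have hid : (MulAut.conj (ε j i)).toMonoidHom = MonoidHom.id F :=
    h.hom_ext (DFunLike.congr_fun hα) fun j' i' =>
      mul_inv_eq_of_eq_mul (by simpa using (hconj i' j' 1 hT1).eq)
  exact hF (isCyclic_of_forall_commute hne fun f =>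
    mul_inv_eq_iff_eq_mul.1 (DFunLike.congr_fun hid f))

/- If no index carries all nontrivial factors, then for every index some nontrivial factor commutes
with all the conjugates of that index, and their images under `θ` must commute. -/
theorem exists_forall_ne_eq_one (h : IsSplitting T r α ε) (hT1 : 1 ∈ T)
    (hT : Subgroup.closure T = ⊤) (hG : HasTrivialFreeCentralizers G) (hF : ¬ IsCyclic F)
    {θ : G →* F} (hθ : Function.Surjective θ)
    (hr : ∀ β : Q →* F, (∀ j, β (r j) = 1) → β = 1) :
    ∃ i, ∀ i' ≠ i, ∀ j, ε j i' = 1 := by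
  by_contra! hcon
  have hcomm (i j j' u) (hu : u ∈ T) (v) (hv : v ∈ T) :
      Commute (θ (α u * ε j i * (α u)⁻¹)) (θ (α v * ε j' i * (α v)⁻¹)) := by
    by_contra hnot
    obtain ⟨i', hi', k, hk⟩ := hcon i
    exact hk (hG.eq_one_of_commute θ hnot (by simpa using h.commute hi' k j 1 hT1 u hu)
      (by simpa using h.commute hi' k j' 1 hT1 v hv))
  have hθε : ∀ j i, θ (ε j i) = 1 := (h.map hθ).eq_one_of_forall_commute hT1 hT hF
    (by simpa only [MonoidHom.comp_apply, map_mul, map_inv] using hcomm)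
  have hθα : θ.comp α = 1 := hr _ fun j => by
    rw [(h.map hθ).map_eq_prod]
    exact List.prod_eq_one (by simp [hθε])
  have hθ1 : θ = 1 := h.hom_ext (DFunLike.congr_fun hθα) hθε
  have : Subsingleton F := subsingleton_of_forall_eq 1 fun f => by
    obtain ⟨g, rfl⟩ := hθ f
    rw [hθ1, MonoidHom.one_apply]
  exact hF inferInstance

theorem exists_hom_quotient_normalClosure {α : Q →* Q} {ε : J → Fin m → Q}
    (h : IsSplitting T r α ε) (hT1 : 1 ∈ T) (hT : Subgroup.closure T = ⊤) (hHopf : IsHopfian Q)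
    (hQ : HasTrivialFreeCentralizers Q) (hF : ¬ IsCyclic F) {θ : Q →* F}
    (hθ : Function.Surjective θ) (hr : ∀ β : Q →* F, (∀ j, β (r j) = 1) → β = 1) :
    ∃ b : Q →* Q ⧸ Subgroup.normalClosure (Set.range r), (∀ q, b (α q) = q) ∧
      ∀ j i, b (ε j i) = 1 := by
  obtain ⟨i, hi⟩ := h.exists_forall_ne_eq_one hT1 hT hQ hF hθ hr
  have hαr (j : J) : α (r j) = ε j i := by
    rw [h.map_eq_prod, prod_ofFn_eq_of_forall_ne i fun i' hi' => hi i' hi' j]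
  have hε (j i') : ε j i' = α (r j) ∨ ε j i' = 1 := by
    rcases eq_or_ne i' i with rfl | hi'
    · exact .inl (hαr j).symm
    · exact .inr (hi i' hi' j)
  have hsurj : Function.Surjective α := h.mem_of_forall_mem (S := α.range)
    (fun q => ⟨q, rfl⟩) fun j i' => by
      rcases hε j i' with h' | h' <;> rw [h']
      exacts [⟨_, rfl⟩, one_mem _]
  let e := MulEquiv.ofBijective α ⟨hHopf α hsurj, hsurj⟩
  have he (q : Q) : e.symm (α q) = q := e.symm_apply_apply q
  refine ⟨(QuotientGroup.mk' _).comp e.symm.toMonoidHom, fun q => congrArg _ (he q),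
    fun j i' => ?_⟩
  rcases hε j i' with h' | h' <;> rw [h']
  · exact (congrArg _ (he (r j))).trans
      ((QuotientGroup.eq_one_iff _).2 (Subgroup.subset_normalClosure ⟨j, rfl⟩))
  · exact map_one _

/- Modulo the normal closure of `r`, and up to an automorphism of each factor, the image of `α` is
the diagonal and the factors vanish, so the diagonal is everything. -/
theorem normalClosure_eq_top {L : Type*} [Nontrivial L] {α : Q →* (L → Q)}
    {ε : J → Fin m → L → Q} (h : IsSplitting T r α ε) (hT1 : 1 ∈ T)
    (hT : Subgroup.closure T = ⊤) (hHopf : IsHopfian Q) (hQ : HasTrivialFreeCentralizers Q)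
    (hF : ¬ IsCyclic F) {θ : Q →* F} (hθ : Function.Surjective θ)
    (hr : ∀ β : Q →* F, (∀ j, β (r j) = 1) → β = 1) :
    Subgroup.normalClosure (Set.range r) = ⊤ := by
  classical
  have hcoord (l : L) := (h.map (f := Pi.evalMonoidHom (fun _ => Q) l)
    (Function.surjective_eval l)).exists_hom_quotient_normalClosure hT1 hT hHopf hQ hF hθ hr
  choose b hbα hbε using hcoord
  obtain ⟨l, l', hll'⟩ := exists_pair_ne L
  have hb : (b l).comp (Pi.evalMonoidHom _ l) = (b l').comp (Pi.evalMonoidHom _ l') :=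
    h.hom_ext (fun q => (hbα l q).trans (hbα l' q).symm)
      fun j i => (hbε l j i).trans (hbε l' j i).symm
  refine (Subgroup.eq_top_iff' _).2 fun q => (QuotientGroup.eq_one_iff q).1 ?_
  let g : L → Q := Pi.mulSingle l (α q l)
  have hg : g l = α q l := Pi.mulSingle_eq_same l _
  have hg' : g l' = 1 := Pi.mulSingle_eq_of_ne hll'.symm _
  calc (q : Q ⧸ Subgroup.normalClosure (Set.range r)) = b l (g l) := hg ▸ (hbα l q).symm
    _ = b l' (g l') := DFunLike.congr_fun hb g
    _ = 1 := by rw [hg', map_one]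

end IsSplitting

theorem isSplitting_mulSingle (T : Set Q) (h : Subgroup.normalClosure (Set.range r) = ⊤) :
    IsSplitting T r (Pi.constMonoidHom (Fin m) Q) fun j i => Pi.mulSingle i (r j) where
  map_eq_prod j := by
    funext l
    have heval := map_list_prod (Pi.evalMonoidHom (fun _ => Q) l)
      (List.ofFn fun i => Pi.mulSingle i (r j))
    have hl : (List.ofFn fun i => Pi.mulSingle (M := fun _ => Q) i (r j) l).prod = r j := by
      rw [prod_ofFn_eq_of_forall_ne l fun i hi =>
        Pi.mulSingle_eq_of_ne (M := fun _ => Q) hi.symm (r j),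
        Pi.mulSingle_eq_same]
    rw [List.map_ofFn] at heval
    exact (heval.trans hl).symm
  commute i i' hi j j' u _ v _ := by
    funext l
    rcases eq_or_ne l i with rfl | hl
    · simp [Pi.mulSingle_eq_of_ne hi]
    · simp [Pi.mulSingle_eq_of_ne hl]
  closure_eq_top := by
    set E := Subgroup.closure (Set.range (Pi.constMonoidHom (Fin m) Q) ∪
      Set.range (Function.uncurry fun j i => Pi.mulSingle i (r j)))
    refine (Subgroup.eq_top_iff' _).2 fun g => Subgroup.pi_mem_of_mulSingle_mem g fun i => ?_
    have hnormal : (E.comap (MonoidHom.mulSingle (fun _ => Q) i)).Normal := by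
      refine ⟨fun q hq u => ?_⟩
      have hu : Pi.constMonoidHom (Fin m) Q u ∈ E := Subgroup.subset_closure (.inl ⟨u, rfl⟩)
      have hconj : (Pi.mulSingle i (u * q * u⁻¹) : Fin m → Q) =
          Pi.constMonoidHom (Fin m) Q u * Pi.mulSingle i q * (Pi.constMonoidHom (Fin m) Q u)⁻¹ := by
        funext l
        rcases eq_or_ne l i with rfl | hl <;> simp [*]
      rw [Subgroup.mem_comap, MonoidHom.mulSingle_apply, hconj]
      exact mul_mem (mul_mem hu hq) (inv_mem hu)
    have hle : Subgroup.normalClosure (Set.range r) ≤ E.comap (MonoidHom.mulSingle _ i) :=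
      Subgroup.normalClosure_le_normal (Set.range_subset_iff.2 fun j =>
        Subgroup.subset_closure (.inr ⟨(j, i), rfl⟩))
    exact hle (h ▸ Subgroup.mem_top (g i))

theorem exists_isSplitting_pi_iff (hm : 2 ≤ m) (hT1 : 1 ∈ T) (hT : Subgroup.closure T = ⊤)
    (hHopf : IsHopfian Q) (hQ : HasTrivialFreeCentralizers Q) (hF : ¬ IsCyclic F) {θ : Q →* F}
    (hθ : Function.Surjective θ) (hr : ∀ β : Q →* F, (∀ j, β (r j) = 1) → β = 1) :
    (∃ (α : Q →* (Fin m → Q)) (ε : J → Fin m → Fin m → Q), IsSplitting T r α ε) ↔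
      Subgroup.normalClosure (Set.range r) = ⊤ := by
  have : Nontrivial (Fin m) := Fin.nontrivial_iff_two_le.2 hm
  exact ⟨fun ⟨_, _, h⟩ => h.normalClosure_eq_top hT1 hT hHopf hQ hF hθ hr,
    fun h => ⟨_, _, isSplitting_mulSingle T h⟩⟩

end Splittings

/-! ### Presentations -/

section Presentations

variable {Z : Type*}

/-- Given relators `S` and one more relator `w` over `Z`, adjoin a generator `none`, make it trivial
and equate it with `w`. The group presented is that of `insert w S`, but the number of relators no
longer depends on whether `w ∈ S`. -/
def paddedRelators (S : Set (FreeGroup Z)) (w : FreeGroup Z) : Set (FreeGroup (Option Z)) :=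
  insert (FreeGroup.map some w * (FreeGroup.of none)⁻¹)
    (insert (FreeGroup.of none) (FreeGroup.map some '' S))

theorem ncard_paddedRelators {S : Set (FreeGroup Z)} (hS : S.Finite) (w : FreeGroup Z) :
    (paddedRelators S w).ncard = S.ncard + 2 := by
  let χ : FreeGroup (Option Z) →* Multiplicative ℤ :=
    FreeGroup.lift fun z => z.elim (Multiplicative.ofAdd 1) 1
  have hnone : χ (FreeGroup.of none) = Multiplicative.ofAdd 1 := FreeGroup.lift_apply_of
  have hsome (x : FreeGroup Z) : χ (FreeGroup.map some x) = 1 :=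
    DFunLike.congr_fun (f := χ.comp (FreeGroup.map some)) (g := 1)
      (FreeGroup.ext_hom _ _ fun z => by simp [χ]) x
  have hz : FreeGroup.of none ∉ FreeGroup.map some '' S := by
    rintro ⟨x, -, hx⟩
    have := (hsome x).symm.trans ((congrArg χ hx).trans hnone)
    exact absurd this (by decide)
  have hw : FreeGroup.map some w * (FreeGroup.of none)⁻¹ ∉
      insert (FreeGroup.of none) (FreeGroup.map some '' S) := by
    have hχw : χ (FreeGroup.map some w * (FreeGroup.of none)⁻¹) = Multiplicative.ofAdd (-1) := by
      rw [map_mul, map_inv, hsome, hnone, one_mul, ofAdd_neg]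
    rintro (hx | ⟨x, -, hx⟩)
    · exact absurd (hχw.symm.trans ((congrArg χ hx).trans hnone)) (by decide)
    · exact absurd ((hsome x).symm.trans ((congrArg χ hx).trans hχw)) (by decide)
  have hfin := hS.image (FreeGroup.map (some : Z → Option Z))
  rw [paddedRelators, Set.ncard_insert_of_notMem hw (hfin.insert _),
    Set.ncard_insert_of_notMem hz hfin,
    Set.ncard_image_of_injective S (FreeGroup.map_injective (Option.some_injective Z))]

theorem nonempty_presentedGroup_paddedRelators_equiv (S : Set (FreeGroup Z)) (w : FreeGroup Z) :
    Nonempty (PresentedGroup (paddedRelators S w) ≃* PresentedGroup (insert w S)) := by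
  let toFun : Option Z → PresentedGroup (insert w S) := fun z => z.elim 1 PresentedGroup.of
  let invFun : Z → PresentedGroup (paddedRelators S w) := fun z => PresentedGroup.of (some z)
  have hto (x : FreeGroup Z) : FreeGroup.lift toFun (FreeGroup.map some x) =
      PresentedGroup.mk (insert w S) x :=
    DFunLike.congr_fun (f := (FreeGroup.lift toFun).comp (FreeGroup.map some))
      (FreeGroup.ext_hom _ _ fun z => by simp [toFun, PresentedGroup.of]) x
  have hinv (x : FreeGroup Z) : FreeGroup.lift invFun x =
      PresentedGroup.mk (paddedRelators S w) (FreeGroup.map some x) :=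
    DFunLike.congr_fun (g := (PresentedGroup.mk _).comp (FreeGroup.map some))
      (FreeGroup.ext_hom _ _ fun z => by simp [invFun, PresentedGroup.of]) x
  have hnone : PresentedGroup.of (rels := paddedRelators S w) none = 1 :=
    PresentedGroup.one_of_mem (.inr (.inl rfl))
  have hrels : ∀ x ∈ paddedRelators S w, FreeGroup.lift toFun x = 1 := by
    rintro x (rfl | rfl | ⟨s, hs, rfl⟩)
    · rw [map_mul, map_inv, hto, PresentedGroup.one_of_mem (Set.mem_insert w S)]
      simp [toFun]
    · simp [toFun]
    · rw [hto, PresentedGroup.one_of_mem (.inr hs)]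
  have hrels' : ∀ x ∈ insert w S, FreeGroup.lift invFun x = 1 := by
    rintro x (rfl | hx) <;> rw [hinv]
    · have := PresentedGroup.one_of_mem (rels := paddedRelators S x) (.inl rfl)
      rw [map_mul, map_inv, mul_inv_eq_one] at this
      exact this.trans hnone
    · exact PresentedGroup.one_of_mem (.inr (.inr ⟨x, hx, rfl⟩))
  refine ⟨MonoidHom.toMulEquiv (PresentedGroup.toGroup hrels) (PresentedGroup.toGroup hrels')
    (PresentedGroup.ext fun z => ?_) (PresentedGroup.ext fun z => ?_)⟩
  · cases z <;> simp [toFun, invFun, hnone]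
  · simp [toFun, invFun]

theorem exists_computable_wordsSet_eq_insert {N : ℕ} {S : Set (FreeGroup (Fin N))}
    (hS : S.Finite) {w : ℕ → FreeGroup (Fin N)} (hw : IsComputableSeq w) :
    ∃ f : ℕ → List (List (Fin N × Bool)), Computable f ∧
      ∀ n, wordsSet (f n) = insert (w n) S := by
  obtain ⟨g, hg, hgw⟩ := hw N (MonoidHom.id _)
  refine ⟨fun n => g n :: hS.toFinset.toList.map FreeGroup.toWord,
    Computable.list_cons.comp hg (Computable.const _), fun n => ?_⟩
  ext x
  simp only [wordsSet, List.mem_cons, List.mem_map, Finset.mem_toList, Set.Finite.mem_toFinset,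
    exists_eq_or_imp, Set.mem_ofPred_eq, Set.mem_insert_iff, hgw, MonoidHom.id_apply,
    exists_exists_and_eq_and, FreeGroup.mk_toWord, exists_eq_right']

theorem exists_computable_presentations [Finite Z] {S : Set (FreeGroup Z)} (hS : S.Finite)
    {w : ℕ → FreeGroup Z} (hw : IsComputableSeq w) :
    ∃ (N c : ℕ) (f : ℕ → List (List (Fin N × Bool))), Computable f ∧
      (∀ n, (wordsSet (f n)).ncard = c) ∧
      ∀ n, Nonempty (PresentedGroup (wordsSet (f n)) ≃* PresentedGroup (insert (w n) S)) := by
  let e := Finite.equivFin (Option Z)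
  let φ := FreeGroup.freeGroupCongr e
  obtain ⟨f, hf, hfw⟩ := exists_computable_wordsSet_eq_insert
    (((hS.image (FreeGroup.map some)).insert (FreeGroup.of none)).image φ)
    (((hw.map (FreeGroup.map some)).mul (.const (FreeGroup.of none)⁻¹)).map φ.toMonoidHom)
  have hpadded (n : ℕ) : wordsSet (f n) = φ '' paddedRelators S (w n) :=
    (hfw n).trans Set.image_insert_eq.symm
  refine ⟨_, S.ncard + 2, f, hf, fun n => ?_, fun n => ?_⟩
  · rw [hpadded, Set.ncard_image_of_injective _ φ.injective, ncard_paddedRelators hS]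
  · rw [hpadded]
    exact (nonempty_presentedGroup_paddedRelators_equiv S (w n)).map
      (PresentedGroup.equivPresentedGroup _ e).symm.trans

end Presentations

section SplittingRelators

open scoped commutatorElement

variable {X J G : Type*} [Group G] {m : ℕ} {R T : Set (FreeGroup X)} {ρ : J → FreeGroup X}

/-- The relator equating `u` with the product of the generators `(j, 0), …, (j, m - 1)`. -/
def splitProdRelator (m : ℕ) (u : FreeGroup X) (j : J) : FreeGroup (X ⊕ J × Fin m) :=
  FreeGroup.map Sum.inl u * (List.ofFn fun i => FreeGroup.of (.inr (j, i))).prod⁻¹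

/-- The conjugate by `u` of the generator `p`. -/
def splitConj (u : FreeGroup X) (p : J × Fin m) : FreeGroup (X ⊕ J × Fin m) :=
  FreeGroup.map Sum.inl u * FreeGroup.of (.inr p) * (FreeGroup.map Sum.inl u)⁻¹

/-- The commutators of the `T`-conjugates of generators `(j, i)` and `(j', i')` with `i ≠ i'`. -/
def splitCommRelators (J : Type*) (m : ℕ) (T : Set (FreeGroup X)) :
    Set (FreeGroup (X ⊕ J × Fin m)) :=
  {x | ∃ i i', i ≠ i' ∧ ∃ j j', ∃ u ∈ T, ∃ v ∈ T,
    ⁅splitConj u ((j, i) : J × Fin m), splitConj v (j', i')⁆ = x}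

/-- The relators of the universal group in which the elements represented by `ρ` are split, with
respect to `T`, in the sense of `IsSplitting`: its homomorphisms are the splittings. -/
def splitRelators (m : ℕ) (R T : Set (FreeGroup X)) (ρ : J → FreeGroup X) :
    Set (FreeGroup (X ⊕ J × Fin m)) :=
  FreeGroup.map Sum.inl '' R ∪
    (splitCommRelators J m T ∪ Set.range fun j => splitProdRelator m (ρ j) j)

theorem finite_splitCommRelators [Finite J] (m : ℕ) (hT : T.Finite) :
    (splitCommRelators J m T).Finite := by
  have hconj : (Set.image2 splitConj T (Set.univ : Set (J × Fin m))).Finite :=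
    hT.image2 _ Set.finite_univ
  refine (hconj.image2 (fun x y => ⁅x, y⁆) hconj).subset ?_
  rintro _ ⟨i, i', -, j, j', u, hu, v, hv, rfl⟩
  exact ⟨_, ⟨u, hu, _, trivial, rfl⟩, _, ⟨v, hv, _, trivial, rfl⟩, rfl⟩

theorem closure_range_union_range_eq_range (ψ : FreeGroup (X ⊕ J × Fin m) →* G)
    {α : PresentedGroup R →* G}
    (hα : ∀ u, ψ (FreeGroup.map Sum.inl u) = α (PresentedGroup.mk R u)) :
    Subgroup.closure (Set.range α ∪
      Set.range (Function.uncurry fun j i => ψ (FreeGroup.of (.inr (j, i))))) = ψ.range := by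
  apply le_antisymm
  · rw [Subgroup.closure_le]
    rintro _ (⟨q, rfl⟩ | ⟨p, rfl⟩)
    · obtain ⟨u, rfl⟩ := PresentedGroup.mk_surjective R q
      exact ⟨_, hα u⟩
    · exact ⟨_, rfl⟩
  · rw [MonoidHom.range_eq_map, ← FreeGroup.closure_range_of, MonoidHom.map_closure,
      Subgroup.closure_le]
    rintro _ ⟨_, ⟨x | p, rfl⟩, rfl⟩
    · exact Subgroup.subset_closure (.inl ⟨_, (hα (FreeGroup.of x)).symm.trans (by simp)⟩)
    · exact Subgroup.subset_closure (.inr ⟨p, rfl⟩)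

theorem isSplitting_iff_surjective (ψ : FreeGroup (X ⊕ J × Fin m) →* G)
    {α : PresentedGroup R →* G}
    (hα : ∀ u, ψ (FreeGroup.map Sum.inl u) = α (PresentedGroup.mk R u)) :
    IsSplitting (PresentedGroup.mk R '' T) (PresentedGroup.mk R ∘ ρ) α
        (fun j i => ψ (FreeGroup.of (.inr (j, i)))) ↔
      Function.Surjective ψ ∧
        ∀ x ∈ splitCommRelators J m T ∪ Set.range fun j => splitProdRelator m (ρ j) j, ψ x = 1 := by
  have hprod (u : FreeGroup X) (j : J) : ψ (splitProdRelator m u j) = 1 ↔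
      α (PresentedGroup.mk R u) = (List.ofFn fun i => ψ (FreeGroup.of (.inr (j, i)))).prod := by
    rw [splitProdRelator, map_mul, map_inv, mul_inv_eq_one, hα, map_list_prod, List.map_ofFn]
    rfl
  have hconj (u : FreeGroup X) (p : J × Fin m) : ψ (splitConj u p) =
      α (PresentedGroup.mk R u) * ψ (FreeGroup.of (.inr p)) * (α (PresentedGroup.mk R u))⁻¹ := by
    simp only [splitConj, map_mul, map_inv, hα]
  have hcomm (u v : FreeGroup X) (p p' : J × Fin m) : ψ ⁅splitConj u p, splitConj v p'⁆ = 1 ↔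
      Commute (ψ (splitConj u p)) (ψ (splitConj v p')) := by
    rw [map_commutatorElement, commutatorElement_eq_one_iff_commute]
  simp only [hconj] at hcomm
  rw [← MonoidHom.range_eq_top, ← closure_range_union_range_eq_range ψ hα]
  constructor
  · refine fun h => ⟨h.closure_eq_top, ?_⟩
    rintro _ (⟨i, i', hi, j, j', u, hu, v, hv, rfl⟩ | ⟨j, rfl⟩)
    · exact (hcomm ..).2 (h.commute hi j j' _ ⟨u, hu, rfl⟩ _ ⟨v, hv, rfl⟩)
    · exact (hprod ..).2 (h.map_eq_prod j)
  · rintro ⟨htop, h⟩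
    refine ⟨fun j => (hprod ..).1 (h _ (.inr ⟨j, rfl⟩)), ?_, htop⟩
    rintro i i' hi j j' _ ⟨u, hu, rfl⟩ _ ⟨v, hv, rfl⟩
    exact (hcomm ..).1 (h _ (.inl ⟨i, i', hi, j, j', u, hu, v, hv, rfl⟩))

theorem exists_surjective_splitRelators_iff :
    (∃ φ : PresentedGroup (splitRelators m R T ρ) →* G, Function.Surjective φ) ↔
      ∃ (α : PresentedGroup R →* G) (ε : J → Fin m → G),
        IsSplitting (PresentedGroup.mk R '' T) (PresentedGroup.mk R ∘ ρ) α ε := by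
  constructor
  · rintro ⟨φ, hφ⟩
    let ψ := φ.comp (PresentedGroup.mk _)
    have hψ {x} (hx : x ∈ splitRelators m R T ρ) : ψ x = 1 :=
      (congrArg φ (PresentedGroup.one_of_mem hx)).trans (map_one φ)
    have hlift (u : FreeGroup X) : FreeGroup.lift (fun x => ψ (FreeGroup.of (.inl x))) u =
        ψ (FreeGroup.map Sum.inl u) :=
      DFunLike.congr_fun (g := ψ.comp (FreeGroup.map Sum.inl))
        (FreeGroup.ext_hom _ _ fun x => by simp) u
    let α : PresentedGroup R →* G := PresentedGroup.toGroup fun u hu =>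
      (hlift u).trans (hψ (.inl ⟨u, hu, rfl⟩))
    exact ⟨α, _, (isSplitting_iff_surjective ψ fun u => (hlift u).symm).2
      ⟨hφ.comp (PresentedGroup.mk_surjective _), fun x hx => hψ (.inr hx)⟩⟩
  · rintro ⟨α, ε, h⟩
    let ψ : FreeGroup (X ⊕ J × Fin m) →* G :=
      FreeGroup.lift (Sum.elim (fun x => α (PresentedGroup.of x)) (Function.uncurry ε))
    have hα (u : FreeGroup X) : ψ (FreeGroup.map Sum.inl u) = α (PresentedGroup.mk R u) :=
      DFunLike.congr_fun (f := ψ.comp (FreeGroup.map Sum.inl)) (g := α.comp (PresentedGroup.mk R))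
        (FreeGroup.ext_hom _ _ fun x => by simp [ψ, PresentedGroup.of]) u
    have hε : (fun j i => ψ (FreeGroup.of (.inr (j, i)))) = ε := by
      funext j i
      exact FreeGroup.lift_apply_of
    obtain ⟨hsurj, hrels⟩ := (isSplitting_iff_surjective ψ hα).1 (hε ▸ h)
    have hψ : ∀ x ∈ splitRelators m R T ρ, ψ x = 1 := by
      rintro x (⟨u, hu, rfl⟩ | hx)
      · rw [hα, PresentedGroup.one_of_mem hu, map_one]
      · exact hrels x hx
    exact ⟨PresentedGroup.toGroup hψ, fun g => (hsurj g).imp' (PresentedGroup.mk _) fun _ hx => hx⟩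

end SplittingRelators

section Collapse

theorem normalClosure_eq_top_iff_of_comp_eq_id {Q K : Type*} [Group Q] [Group K] {S : Set Q}
    (hS : Subgroup.closure S = ⊤) {θ : Q →* K} {s : K →* Q} (hs : θ.comp s = MonoidHom.id K)
    (d : Set K) :
    Subgroup.normalClosure ((fun q => q * (s (θ q))⁻¹) '' S ∪ s '' d) = ⊤ ↔
      Subgroup.normalClosure d = ⊤ := by
  have hθs : Function.LeftInverse θ s := DFunLike.congr_fun hs
  constructor <;> intro h
  · have hle : Subgroup.normalClosure ((fun q => q * (s (θ q))⁻¹) '' S ∪ s '' d) ≤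
        (Subgroup.normalClosure d).comap θ := by
      refine Subgroup.normalClosure_le_normal ?_
      rintro _ (⟨q, -, rfl⟩ | ⟨k, hk, rfl⟩)
      · simp [hθs _]
      · simpa [hθs _] using Subgroup.subset_normalClosure hk
    rw [h, top_le_iff] at hle
    refine (Subgroup.eq_top_iff' _).2 fun k => ?_
    have := hle ▸ Subgroup.mem_top (s k)
    rwa [Subgroup.mem_comap, hθs] at this
  · set N := Subgroup.normalClosure ((fun q => q * (s (θ q))⁻¹) '' S ∪ s '' d)
    have hle : Subgroup.normalClosure d ≤ N.comap s := Subgroup.normalClosure_le_normal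
      fun k hk => Subgroup.subset_normalClosure (.inr ⟨k, hk, rfl⟩)
    rw [eq_top_iff, ← hS, Subgroup.closure_le]
    intro q hq
    have hθq : s (θ q) ∈ N := hle (h ▸ Subgroup.mem_top (θ q))
    rw [SetLike.mem_coe, ← mul_mem_cancel_right (inv_mem hθq)]
    exact Subgroup.subset_normalClosure (.inl ⟨q, hq, rfl⟩)

variable {X ι G : Type*} [Group G] {R : Set (FreeGroup X)} {c : Set (FreeGroup ι)}
  {θ : PresentedGroup R →* FreeGroup ι} {σ : FreeGroup ι →* FreeGroup X} {w : FreeGroup ι}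

/-- For a homomorphism `θ` with section `σ`, words for elements which normally generate the group
presented by `R` if and only if `w` and `c` normally generate the free group on `ι`. Only the entry
at `none` depends on `w`. -/
def collapseFamily (θ : PresentedGroup R →* FreeGroup ι) (σ : FreeGroup ι →* FreeGroup X)
    (c : Set (FreeGroup ι)) (w : FreeGroup ι) : Option (X ⊕ c) → FreeGroup X :=
  fun j => j.elim (σ w)
    (Sum.elim (fun x => FreeGroup.of x * (σ (θ (PresentedGroup.of x)))⁻¹) fun y => σ y)

theorem range_mk_comp_collapseFamily : Set.range (PresentedGroup.mk R ∘ collapseFamily θ σ c w) =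
    (fun q => q * ((PresentedGroup.mk R).comp σ (θ q))⁻¹) '' Set.range PresentedGroup.of ∪
      (PresentedGroup.mk R).comp σ '' insert w c := by
  have hinl : PresentedGroup.mk R ∘ (collapseFamily θ σ c w ∘ some) ∘ Sum.inl =
      (fun q => q * ((PresentedGroup.mk R).comp σ (θ q))⁻¹) ∘ PresentedGroup.of := by
    funext x
    exact (map_mul _ _ _).trans (congrArg _ (map_inv _ _))
  rw [← Set.range_comp, ← hinl, Set.image_insert_eq, Set.image_eq_range]
  ext q
  simp [collapseFamily, Option.exists, Sum.exists, eq_comm]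

theorem eq_one_of_forall_collapseFamily [IsMulTorsionFree G]
    (hc : ∀ i, ∃ n, 0 < n ∧ FreeGroup.of i ^ n ∈ c) {β : PresentedGroup R →* G}
    (hβ : ∀ j, β (PresentedGroup.mk R (collapseFamily θ σ c w j)) = 1) : β = 1 := by
  have hσ : (β.comp (PresentedGroup.mk R)).comp σ = 1 := FreeGroup.ext_hom _ _ fun i => by
    obtain ⟨n, hn, hmem⟩ := hc i
    refine (pow_eq_one_iff_left hn.ne').1 ?_
    rw [← map_pow]
    exact hβ (some (.inr ⟨_, hmem⟩))
  refine PresentedGroup.ext fun x => ?_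
  have hx : β (PresentedGroup.of x) * (β (PresentedGroup.mk R (σ (θ (.of x)))))⁻¹ = 1 := by
    rw [← map_inv, ← map_inv, ← map_mul]
    exact hβ (some (.inl x))
  exact (mul_inv_eq_one.1 hx).trans (DFunLike.congr_fun hσ _)

theorem exists_isSplitting_collapseFamily_iff [Nontrivial ι] {m : ℕ} (hm : 2 ≤ m)
    (hHopf : IsHopfian (PresentedGroup R)) (hQ : HasTrivialFreeCentralizers (PresentedGroup R))
    (hσ : (θ.comp (PresentedGroup.mk R)).comp σ = MonoidHom.id _)
    (hc : ∀ i, ∃ n, 0 < n ∧ FreeGroup.of i ^ n ∈ c) :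
    (∃ (α : PresentedGroup R →* (Fin m → PresentedGroup R))
        (ε : Option (X ⊕ c) → Fin m → Fin m → PresentedGroup R),
        IsSplitting (PresentedGroup.mk R '' insert 1 (Set.range FreeGroup.of))
          (PresentedGroup.mk R ∘ collapseFamily θ σ c w) α ε) ↔
      Subgroup.normalClosure (insert w c) = ⊤ := by
  have hclosure : Subgroup.closure
      (PresentedGroup.mk R '' insert 1 (Set.range FreeGroup.of)) = ⊤ := by
    rw [← MonoidHom.map_closure, Subgroup.closure_insert_one, FreeGroup.closure_range_of,
      Subgroup.map_top_of_surjective _ (PresentedGroup.mk_surjective R)]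
  have hone : 1 ∈ PresentedGroup.mk R '' insert 1 (Set.range FreeGroup.of) :=
    ⟨1, Set.mem_insert _ _, map_one _⟩
  have hθ : Function.Surjective θ := fun k => ⟨_, DFunLike.congr_fun hσ k⟩
  have hr (β : PresentedGroup R →* FreeGroup ι)
      (hβ : ∀ j, β ((PresentedGroup.mk R ∘ collapseFamily θ σ c w) j) = 1) : β = 1 :=
    eq_one_of_forall_collapseFamily hc hβ
  rw [exists_isSplitting_pi_iff hm hone hclosure hHopf hQ (not_isCyclic_freeGroup ι) hθ hr,
    range_mk_comp_collapseFamily,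
    normalClosure_eq_top_iff_of_comp_eq_id (PresentedGroup.closure_range_of R) hσ]

end Collapse

section Undecidability

theorem exists_computable_presentations_surjective_iff_of_rePred {X : Type*} [Finite X]
    {R : Set (FreeGroup X)} (hR : R.Finite) (hHopf : IsHopfian (PresentedGroup R))
    (hQ : HasTrivialFreeCentralizers (PresentedGroup R))
    {θ : PresentedGroup R →* FreeGroup (Fin 2)} (hθ : Function.Surjective θ) {m : ℕ} (hm : 2 ≤ m)
    {p : ℕ → Prop} (hp : REPred p) :
    ∃ (N k : ℕ) (f : ℕ → List (List (Fin N × Bool))), Computable f ∧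
      (∀ n, (wordsSet (f n)).ncard = k) ∧
      ∀ n, (∃ φ : PresentedGroup (wordsSet (f n)) →* (Fin m → PresentedGroup R),
        Function.Surjective φ) ↔ p n := by
  obtain ⟨c, w, hc, hpow, hw, hiff⟩ := exists_normalClosure_insert_eq_top_iff_of_rePred hp
  obtain ⟨σ, hσ⟩ := exists_comp_eq_id_of_surjective
    (f := θ.comp (PresentedGroup.mk R)) (hθ.comp (PresentedGroup.mk_surjective R))
  let T : Set (FreeGroup X) := insert 1 (Set.range FreeGroup.of)
  have hT : T.Finite := (Set.finite_range _).insert 1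
  have : Finite c := hc
  let S : Set (FreeGroup (X ⊕ Option (X ⊕ c) × Fin m)) := FreeGroup.map Sum.inl '' R ∪
    (splitCommRelators _ m T ∪
      Set.range fun j => splitProdRelator m (collapseFamily θ σ c 1 (some j)) (some j))
  have hS : S.Finite :=
    (hR.image _).union ((finite_splitCommRelators m hT).union (Set.finite_range _))
  have hrels (n : ℕ) : splitRelators m R T (collapseFamily θ σ c (w n)) =
      insert (splitProdRelator m (σ (w n)) none) S := by
    rw [splitRelators, Option.range_eq, Set.union_insert, Set.union_insert]
    rfl
  obtain ⟨N, k, f, hf, hk, hequiv⟩ := exists_computable_presentations hS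
    (((hw.map σ).map (FreeGroup.map Sum.inl)).mul
      (.const (List.ofFn fun i => FreeGroup.of (.inr (none, i))).prod⁻¹))
  refine ⟨N, k, f, hf, hk, fun n => ?_⟩
  obtain ⟨e⟩ := hequiv n
  rw [← hiff n, ← exists_isSplitting_collapseFamily_iff hm hHopf hQ hσ hpow,
    ← exists_surjective_splitRelators_iff, hrels]
  exact ⟨fun ⟨φ, hφ⟩ => ⟨φ.comp e.symm.toMonoidHom, hφ.comp e.symm.surjective⟩,
    fun ⟨φ, hφ⟩ => ⟨φ.comp e.toMonoidHom, hφ.comp e.surjective⟩⟩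

theorem exists_rePred_not_computablePred : ∃ p : ℕ → Prop, REPred p ∧ ¬ ComputablePred p := by
  refine ⟨fun n => ((Denumerable.ofNat Nat.Partrec.Code n).eval 0).Dom,
    (ComputablePred.halting_problem_re 0).comp (Computable.ofNat _), fun h => ?_⟩
  have hred : (fun c : Nat.Partrec.Code => (c.eval 0).Dom) ≤₀
      fun n => ((Denumerable.ofNat Nat.Partrec.Code n).eval 0).Dom :=
    ⟨_, Computable.encode, fun c => by simp only [Denumerable.ofNat_encode]⟩
  exact ComputablePred.halting_problem 0 (ComputablePred.computable_of_manyOneReducible hred h)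

end Undecidability

/-- Theorem 1.1 (2): for suitable `Q` and `m ≥ 2`, there are a finite generating type
`Fin N`, a constant `c` and a computable sequence `(R_n)` of finite relator sets of
cardinality `c` such that `{n : PresentedGroup (R_n) maps onto Q^m}` is recursively
enumerable but not recursive. -/
theorem stmt4 (X : Type) [Finite X] (R : Set (FreeGroup X)) (hRfin : R.Finite)
    (hHopf : IsHopfian (PresentedGroup R))
    (hF2 : ∃ θ : PresentedGroup R →* FreeGroup (Fin 2), Function.Surjective θ)
    (hcent : ∀ H : Subgroup (PresentedGroup R), IsFreeGroup H → ¬ IsCyclic H →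
      Subgroup.centralizer (H : Set (PresentedGroup R)) = ⊥)
    (m : ℕ) (hm : 2 ≤ m) :
    ∃ (N : ℕ) (c : ℕ) (f : ℕ → List (List (Fin N × Bool))),
      Computable f ∧
      (∀ n : ℕ, (wordsSet (f n)).ncard = c) ∧
      (∃ g : ℕ →. Unit, Partrec g ∧
        ∀ n : ℕ,
          (∃ φ : PresentedGroup (wordsSet (f n)) →* (Fin m → PresentedGroup R),
            Function.Surjective φ) ↔ (g n).Dom) ∧
      ¬ ComputablePred (fun n : ℕ =>
          ∃ φ : PresentedGroup (wordsSet (f n)) →* (Fin m → PresentedGroup R),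
            Function.Surjective φ) := by
  obtain ⟨θ, hθ⟩ := hF2
  obtain ⟨p, hp, hnot⟩ := exists_rePred_not_computablePred
  obtain ⟨N, c, f, hf, hcard, hiff⟩ :=
    exists_computable_presentations_surjective_iff_of_rePred hRfin hHopf hcent hθ hm hp
  exact ⟨N, c, f, hf, hcard,
    ⟨_, hp, fun n => (hiff n).trans ⟨fun h => ⟨h, trivial⟩, fun h => h.1⟩⟩,
    fun h => hnot (h.of_eq hiff)⟩
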